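/- Comparison with the Poisson integral: Let v ∈ L_{2s} ∩ C^{1,1}_loc(ℝ^n) be bounded with v(x) ≥ 0 for all x ∈ ℝ^n, and suppose (-Δ)^s v(x) ≤ 0 at every point x where v(x) > 0. Then for every r > 0 and every x ∈ ℝ^n with |x| < r, v(x) ≤ ∫_{|y| > r} P_r(y, x) v(y) dy, where P_r(y, x) = B(n,s) · ((r² − |x|²)/(|y|² − r²))^s · |x − y|^{−n} for |y| > r, |x| < r, and B(n,s) = Γ(n/2) sin(πs) / π^{(n/2)+1}. -/

import Mathlib

open MeasureTheory Filter Metric Set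

noncomputable section

/-- Points of ℝⁿ with the Euclidean norm. -/
abbrev Pt (n : ℕ) := EuclideanSpace ℝ (Fin n)

/-- The space `L_{2s}`: locally integrable functions `u` with
`∫ |u(x)|/(1+|x|^{n+2s}) dx < ∞`. -/
def MemL2s (n : ℕ) (s : ℝ) (u : Pt n → ℝ) : Prop :=
  LocallyIntegrable u volume ∧
    Integrable (fun x : Pt n => |u x| / (1 + ‖x‖ ^ ((n : ℝ) + 2 * s))) volume

/-- `u` is locally `C^{1,1}` on the open set `D`. -/
def C11loc (n : ℕ) (u : Pt n → ℝ) (D : Set (Pt n)) : Prop :=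
  ∀ x ∈ D, ∃ ε > 0, ball x ε ⊆ D ∧ DifferentiableOn ℝ u (ball x ε) ∧
    ∃ K : NNReal, LipschitzOnWith K (fun y => fderivWithin ℝ u (ball x ε) y) (ball x ε)

/-- `(-Δ)^s u (x) = L`, with the principal value defined as the limit, as `ε → 0⁺`, of
`C_{n,s} ∫_{ℝⁿ \ B_ε(x)} (u(x) - u(y))/|x-y|^{n+2s} dy`. -/
def HasFracLap (n : ℕ) (s Cns : ℝ) (u : Pt n → ℝ) (x : Pt n) (L : ℝ) : Prop :=
  Tendsto (fun ε : ℝ =>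
      Cns * ∫ y in {y : Pt n | ε ≤ dist x y}, (u x - u y) / dist x y ^ ((n : ℝ) + 2 * s))
    (nhdsWithin 0 (Set.Ioi 0)) (nhds L)

/-- The index of the last coordinate (`x_n`). -/
def lastIdx (n : ℕ) (hn : 0 < n) : Fin n := ⟨n - 1, Nat.sub_lt hn Nat.one_pos⟩

/-- The unit vector `e_n` in the `x_n` direction. -/
def eN (n : ℕ) (hn : 0 < n) : Pt n := EuclideanSpace.single (lastIdx n hn) 1

/-- The constant `B(n,s) = Γ(n/2) sin(πs) / π^{n/2+1}` of the exterior Poisson kernel. -/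
def Bns (n : ℕ) (s : ℝ) : ℝ :=
  Real.Gamma ((n : ℝ) / 2) * Real.sin (Real.pi * s) / Real.pi ^ ((n : ℝ) / 2 + 1)

/-!
The Poisson extension `w` of the values of `v` outside the ball of radius `r` has the mean value
property for the exterior Poisson kernels of the small balls inside: after an inversion about the
exterior point, and because the superlevel sets of the quotient of the two distance factors are
balls, the layer cake formula reduces this to the integral of `‖z - x‖ ^ (-n)` over the region
between two balls, which is computed along chords.

If `w x < v x` somewhere in the ball, then by lower semicontinuity of `w` the difference `v - w`
attains a positive maximum `d` at an interior point `x₀`. Since `v ≤ w + d` in the ball and `v = w`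
outside it, the mean value of `v` over a ball of radius `ρ` around `x₀` is less than `v x₀` by at
least a fixed multiple of `ρ ^ (2 * s)`. Divided by `ρ ^ (2 * s)`, the exterior Poisson kernels tend
to `‖h‖ ^ (-n - 2 * s)` as `ρ → 0`, so the fractional Laplacian of `v` at `x₀` is positive.
-/

section

open Real Module

/-! ### Integrals of powers and logarithms -/

lemma lintegral_rpow_mul_exp_neg_mul {a r : ℝ} (ha : 0 < a) (hr : 0 < r) :
    ∫⁻ t in Ioi (0 : ℝ), ENNReal.ofReal (t ^ (a - 1) * exp (-(r * t))) =
      ENNReal.ofReal ((1 / r) ^ a * Gamma a) := by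
  have hval := integral_rpow_mul_exp_neg_mul_Ioi ha hr
  have hpos : 0 < (1 / r) ^ a * Gamma a := by have := Gamma_pos_of_pos ha; positivity
  rw [← hval, ofReal_integral_eq_lintegral_ofReal]
  · exact .of_integral_ne_zero (hval ▸ hpos.ne')
  · filter_upwards [ae_restrict_mem measurableSet_Ioi] with t ht
    have : 0 < t := ht
    positivity

/- Writing `1 / (b + c) = ∫₀^∞ exp (-(b + c) u) du` reduces the integral to `Γ(s) Γ(1 - s)`. -/
lemma lintegral_rpow_div_add {s b : ℝ} (hs : s ∈ Ioo (0 : ℝ) 1) (hb : 0 < b) :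
    ∫⁻ c in Ioi (0 : ℝ), ENNReal.ofReal (c ^ (s - 1) / (b + c)) =
      ENNReal.ofReal (π / sin (π * s) * b ^ (s - 1)) := by
  obtain ⟨hs0, hs1⟩ := hs
  have hΓ : 0 < Gamma s := Gamma_pos_of_pos hs0
  have inner_u : ∀ c ∈ Ioi (0 : ℝ), ENNReal.ofReal (c ^ (s - 1) / (b + c)) =
      ∫⁻ u in Ioi (0 : ℝ), ENNReal.ofReal (c ^ (s - 1) * exp (-((b + c) * u))) := by
    intro c (hc : 0 < c)
    have h := lintegral_rpow_mul_exp_neg_mul one_pos (add_pos hb hc)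
    simp only [sub_self, rpow_zero, one_mul, rpow_one, Gamma_one, mul_one] at h
    simp_rw [ENNReal.ofReal_mul (rpow_nonneg hc.le (s - 1))]
    rw [lintegral_const_mul' _ _ ENNReal.ofReal_ne_top, h,
      ← ENNReal.ofReal_mul (by positivity), mul_one_div]
  have inner_c : ∀ u ∈ Ioi (0 : ℝ),
      ∫⁻ c in Ioi (0 : ℝ), ENNReal.ofReal (c ^ (s - 1) * exp (-((b + c) * u))) =
        ENNReal.ofReal (Gamma s) * ENNReal.ofReal (u ^ ((1 - s) - 1) * exp (-(b * u))) := by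
    intro u (hu : 0 < u)
    have split : ∀ c : ℝ, c ^ (s - 1) * exp (-((b + c) * u)) =
        exp (-(b * u)) * (c ^ (s - 1) * exp (-(u * c))) := fun c => by
      rw [show -((b + c) * u) = -(b * u) + -(u * c) by ring, exp_add]; ring
    simp_rw [split, ENNReal.ofReal_mul (exp_nonneg _)]
    rw [lintegral_const_mul' _ _ ENNReal.ofReal_ne_top, lintegral_rpow_mul_exp_neg_mul hs0 hu,
      ← ENNReal.ofReal_mul (exp_nonneg _), ← ENNReal.ofReal_mul hΓ.le, one_div,
      inv_rpow hu.le, ← rpow_neg hu.le]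
    ring_nf
  rw [setLIntegral_congr_fun measurableSet_Ioi inner_u, lintegral_lintegral_swap (by fun_prop),
    setLIntegral_congr_fun measurableSet_Ioi inner_c,
    lintegral_const_mul' _ _ ENNReal.ofReal_ne_top,
    lintegral_rpow_mul_exp_neg_mul (by linarith) hb, ← ENNReal.ofReal_mul hΓ.le,
    ← Gamma_mul_Gamma_one_sub, one_div, inv_rpow hb.le, ← rpow_neg hb.le]
  ring_nf

lemma lintegral_Ioo_rpow_sub_one {s a b : ℝ} (hs : 0 < s) (hb : 0 ≤ b) (hab : b ≤ a) :
    ∫⁻ t in Ioo b a, ENNReal.ofReal (t ^ (s - 1)) = ENNReal.ofReal ((a ^ s - b ^ s) / s) := by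
  have hint : IntervalIntegrable (fun t : ℝ => t ^ (s - 1)) volume b a :=
    intervalIntegral.intervalIntegrable_rpow' (by linarith)
  rw [restrict_Ioo_eq_restrict_Ioc, ← ofReal_integral_eq_lintegral_ofReal hint.1,
    ← intervalIntegral.integral_of_le hab, integral_rpow (.inl (by linarith)), sub_add_cancel]
  filter_upwards [ae_restrict_mem measurableSet_Ioc] with t ht
  exact rpow_nonneg (hb.trans ht.1.le) _

lemma lintegral_Ioo_inv {a b : ℝ} (hb : 0 < b) (hab : b ≤ a) :
    ∫⁻ t in Ioo b a, ENNReal.ofReal t⁻¹ = ENNReal.ofReal (log (a / b)) := by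
  have hint : IntervalIntegrable (fun t : ℝ => t⁻¹) volume b a :=
    intervalIntegrable_inv_iff.2
      (.inr <| notMem_uIcc_of_lt hb (hb.trans_le hab))
  rw [restrict_Ioo_eq_restrict_Ioc, ← ofReal_integral_eq_lintegral_ofReal hint.1,
    ← intervalIntegral.integral_of_le hab, integral_inv_of_pos hb (hb.trans_le hab)]
  filter_upwards [ae_restrict_mem measurableSet_Ioc] with t ht
  exact inv_nonneg.2 (hb.trans ht.1).le

lemma lintegral_log_div_mul_rpow {s a b : ℝ} (hs : s ∈ Ioo (0 : ℝ) 1) (hb : 0 ≤ b) (hab : b ≤ a) :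
    ∫⁻ c in Ioi (0 : ℝ), ENNReal.ofReal (log ((a + c) / (b + c))) * ENNReal.ofReal (c ^ (s - 1)) =
      ENNReal.ofReal (π / sin (π * s) * (a ^ s - b ^ s) / s) := by
  have inner_t : ∀ c ∈ Ioi (0 : ℝ),
      ENNReal.ofReal (log ((a + c) / (b + c))) * ENNReal.ofReal (c ^ (s - 1)) =
        ∫⁻ t in Ioo b a, ENNReal.ofReal (c ^ (s - 1) / (t + c)) := by
    intro c (hc : 0 < c)
    have hlog := lintegral_Ioo_inv (add_pos_of_nonneg_of_pos hb hc) (by linarith : b + c ≤ a + c)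
    have hshift := (measurePreserving_add_right volume c).setLIntegral_comp_preimage_emb
      (measurableEmbedding_addRight c) (fun t => ENNReal.ofReal t⁻¹) (Ioo (b + c) (a + c))
    rw [preimage_add_const_Ioo, add_sub_cancel_right, add_sub_cancel_right] at hshift
    rw [← hlog, ← hshift, mul_comm, ← lintegral_const_mul' _ _ ENNReal.ofReal_ne_top]
    simp_rw [← ENNReal.ofReal_mul (rpow_nonneg hc.le (s - 1)), div_eq_mul_inv]
  have hsin : 0 < sin (π * s) :=
    sin_pos_of_pos_of_lt_pi (mul_pos pi_pos hs.1) (by nlinarith [pi_pos, hs.2])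
  rw [setLIntegral_congr_fun measurableSet_Ioi inner_t, lintegral_lintegral_swap (by fun_prop),
    setLIntegral_congr_fun measurableSet_Ioo fun t ht =>
      lintegral_rpow_div_add hs (hb.trans_lt ht.1)]
  simp_rw [ENNReal.ofReal_mul (show 0 ≤ π / sin (π * s) by positivity)]
  rw [lintegral_const_mul' _ _ ENNReal.ofReal_ne_top, lintegral_Ioo_rpow_sub_one hs.1 hb hab,
    ← ENNReal.ofReal_mul (by positivity), mul_div_assoc]

lemma setLIntegral_Ioo_neg_neg (f : ℝ → ENNReal) (a b : ℝ) :
    ∫⁻ t in Ioo (-b) (-a), f t = ∫⁻ t in Ioo a b, f (-t) := by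
  have := (Measure.measurePreserving_neg (volume : Measure ℝ)).setLIntegral_comp_preimage_emb
    (Homeomorph.neg ℝ).measurableEmbedding f (Ioo (-b) (-a))
  rw [← this]
  simp

lemma lintegral_Ioo_diff_Icc_abs_inv {a₁ a₂ b₁ b₂ : ℝ} (ha₂ : 0 < a₂) (ha : a₂ ≤ a₁)
    (hb₂ : 0 < b₂) (hb : b₂ ≤ b₁) :
    ∫⁻ t in Ioo (-b₁) a₁ \ Icc (-b₂) a₂, ENNReal.ofReal |t|⁻¹ =
      ENNReal.ofReal (log (a₁ * b₁ / (a₂ * b₂))) := by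
  have hset : Ioo (-b₁) a₁ \ Icc (-b₂) a₂ = Ioo (-b₁) (-b₂) ∪ Ioo a₂ a₁ := by
    ext t
    simp only [Set.mem_sdiff, mem_Ioo, mem_Icc, mem_union, not_and_or, not_le]
    constructor
    · rintro ⟨⟨h₁, h₂⟩, h | h⟩
      exacts [.inl ⟨h₁, h⟩, .inr ⟨h, h₂⟩]
    · rintro (⟨h₁, h₂⟩ | ⟨h₁, h₂⟩)
      exacts [⟨⟨h₁, by linarith⟩, .inl h₂⟩, ⟨⟨by linarith, h₂⟩, .inr h₁⟩]
  have hdisj : Disjoint (Ioo (-b₁) (-b₂)) (Ioo a₂ a₁) :=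
    Set.disjoint_left.2 fun t h₁ h₂ => by linarith [h₁.2, h₂.1]
  have abs_inv_eq {p q : ℝ} (hp : 0 < p) :
      ∀ t ∈ Ioo p q, ENNReal.ofReal |t|⁻¹ = ENNReal.ofReal t⁻¹ := fun t ht => by
    rw [abs_of_pos (hp.trans ht.1)]
  rw [hset, lintegral_union measurableSet_Ioo hdisj, setLIntegral_Ioo_neg_neg]
  simp_rw [abs_neg]
  rw [setLIntegral_congr_fun measurableSet_Ioo (abs_inv_eq hb₂),
    setLIntegral_congr_fun measurableSet_Ioo (abs_inv_eq ha₂),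
    lintegral_Ioo_inv hb₂ hb, lintegral_Ioo_inv ha₂ ha,
    ← ENNReal.ofReal_add (log_nonneg ((one_le_div hb₂).2 hb)) (log_nonneg ((one_le_div ha₂).2 ha)),
    ← log_mul (by have := hb₂.trans_le hb; positivity) (by have := ha₂.trans_le ha; positivity)]
  congr 2
  field_simp

/-! ### Chords of a ball and polar coordinates -/

section

variable {E : Type*} [SeminormedAddCommGroup E]

lemma mem_ball_iff_sq_sub_norm_sq_pos {c z : E} {R : ℝ} (hR : 0 ≤ R) :
    z ∈ ball c R ↔ 0 < R ^ 2 - ‖z - c‖ ^ 2 := by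
  rw [mem_ball_iff_norm, sub_pos, sq_lt_sq₀ (norm_nonneg _) hR]

lemma mem_closedBall_iff_sq_sub_norm_sq_nonneg {c z : E} {R : ℝ} (hR : 0 ≤ R) :
    z ∈ closedBall c R ↔ 0 ≤ R ^ 2 - ‖z - c‖ ^ 2 := by
  rw [mem_closedBall_iff_norm, sub_nonneg, sq_le_sq₀ (norm_nonneg _) hR]

end

section

variable {E : Type*} [NormedAddCommGroup E] [InnerProductSpace ℝ E]

lemma exists_sq_sub_norm_line_sq_eq_mul {c x θ : E} {R : ℝ} (hx : x ∈ ball c R) (hθ : ‖θ‖ = 1) :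
    ∃ a b : ℝ, 0 < a ∧ 0 < b ∧ a * b = R ^ 2 - ‖x - c‖ ^ 2 ∧
      ∀ t : ℝ, R ^ 2 - ‖t • θ + x - c‖ ^ 2 = (a - t) * (t + b) := by
  rw [mem_ball_iff_norm] at hx
  set i := inner ℝ θ (x - c) with hi
  set D := √(i ^ 2 + (R ^ 2 - ‖x - c‖ ^ 2))
  have hpow : 0 < R ^ 2 - ‖x - c‖ ^ 2 := by nlinarith [norm_nonneg (x - c)]
  have hDsq : D ^ 2 = i ^ 2 + (R ^ 2 - ‖x - c‖ ^ 2) := sq_sqrt (by positivity)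
  have hiD : |i| < D := by
    rw [← sqrt_sq_eq_abs]
    exact sqrt_lt_sqrt (sq_nonneg i) (by linarith)
  obtain ⟨hi₁, hi₂⟩ := abs_lt.1 hiD
  refine ⟨D - i, D + i, by linarith, by linarith, by linear_combination hDsq, fun t => ?_⟩
  rw [add_sub_assoc, norm_add_sq_real, norm_smul, real_inner_smul_left, hθ, ← hi, mul_one,
    norm_eq_abs, sq_abs]
  linear_combination -hDsq

lemma lintegral_line_ball_diff_closedBall {c₁ c₂ x θ : E} {R₁ R₂ : ℝ} (hx : x ∈ ball c₂ R₂)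
    (hsub : closedBall c₂ R₂ ⊆ ball c₁ R₁) (hθ : ‖θ‖ = 1) :
    ∫⁻ t in {t : ℝ | t • θ + x ∈ ball c₁ R₁ \ closedBall c₂ R₂}, ENNReal.ofReal |t|⁻¹ =
      ENNReal.ofReal (log ((R₁ ^ 2 - ‖x - c₁‖ ^ 2) / (R₂ ^ 2 - ‖x - c₂‖ ^ 2))) := by
  have hx₁ : x ∈ ball c₁ R₁ := hsub (ball_subset_closedBall hx)
  have hR₁ : 0 ≤ R₁ := (pos_of_mem_ball hx₁).le
  have hR₂ : 0 ≤ R₂ := (pos_of_mem_ball hx).le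
  obtain ⟨a₁, b₁, ha₁, hb₁, hab₁, quad₁⟩ := exists_sq_sub_norm_line_sq_eq_mul hx₁ hθ
  obtain ⟨a₂, b₂, ha₂, hb₂, hab₂, quad₂⟩ := exists_sq_sub_norm_line_sq_eq_mul hx hθ
  have mem₁ (t : ℝ) : t • θ + x ∈ ball c₁ R₁ ↔ t ∈ Ioo (-b₁) a₁ := by
    rw [mem_ball_iff_sq_sub_norm_sq_pos hR₁, quad₁, mem_Ioo]
    constructor
    · intro h
      constructor <;> by_contra! h' <;> nlinarith
    · rintro ⟨h, h'⟩
      nlinarith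
  have mem₂ (t : ℝ) : t • θ + x ∈ closedBall c₂ R₂ ↔ t ∈ Icc (-b₂) a₂ := by
    rw [mem_closedBall_iff_sq_sub_norm_sq_nonneg hR₂, quad₂, mem_Icc]
    constructor
    · intro h
      constructor <;> by_contra! h' <;> nlinarith
    · rintro ⟨h, h'⟩
      nlinarith
  have nested : Icc (-b₂) a₂ ⊆ Ioo (-b₁) a₁ := fun t ht => (mem₁ t).1 (hsub ((mem₂ t).2 ht))
  have ha : a₂ < a₁ := (nested (right_mem_Icc.2 (by linarith))).2
  have hb : -b₁ < -b₂ := (nested (left_mem_Icc.2 (by linarith))).1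
  have hset : {t : ℝ | t • θ + x ∈ ball c₁ R₁ \ closedBall c₂ R₂} =
      Ioo (-b₁) a₁ \ Icc (-b₂) a₂ := by
    ext t
    exact and_congr (mem₁ t) (not_congr (mem₂ t))
  rw [hset, lintegral_Ioo_diff_Icc_abs_inv ha₂ ha.le hb₂ (by linarith), hab₁, hab₂]

variable [FiniteDimensional ℝ E] [MeasurableSpace E] [BorelSpace E]

lemma lintegral_eq_lintegral_sphere_rays [Nontrivial E] {G : E → ENNReal} (hG : Measurable G) :
    ∫⁻ h, G h = ∫⁻ θ : sphere (0 : E) 1, (∫⁻ t in Ioi (0 : ℝ),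
      ENNReal.ofReal (t ^ (finrank ℝ E - 1)) * G (t • (θ : E)))
        ∂(volume : Measure E).toSphere := by
  have polar := (volume : Measure E).measurePreserving_homeomorphUnitSphereProd.lintegral_comp_emb
    (Homeomorph.measurableEmbedding _)
    (fun p : sphere (0 : E) 1 × Ioi (0 : ℝ) => G (p.2.1 • p.1.1))
  have polar_symm (x : ({0}ᶜ : Set E)) :
      (homeomorphUnitSphereProd E x).2.1 • (homeomorphUnitSphereProd E x).1.1 = x.1 := by
    have hx : ‖x.1‖ ≠ 0 := norm_ne_zero_iff.2 x.2
    simp [smul_smul, hx]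
  simp only [polar_symm] at polar
  have off_zero : ∫⁻ h, G h = ∫⁻ h in {0}ᶜ, G h := by rw [restrict_compl_singleton]
  rw [off_zero, ← lintegral_subtype_comap (measurableSet_singleton _).compl, polar,
    lintegral_prod _ (by fun_prop)]
  refine lintegral_congr fun θ => ?_
  rw [Measure.volumeIoiPow, lintegral_withDensity_eq_lintegral_mul _ (by fun_prop) (by fun_prop)]
  exact lintegral_subtype_comap measurableSet_Ioi
    (fun t : ℝ => ENNReal.ofReal (t ^ (finrank ℝ E - 1)) * G (t • (θ : E)))

lemma two_mul_lintegral_eq_lintegral_sphere_lines [Nontrivial E] {G : E → ENNReal}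
    (hG : Measurable G) :
    2 * ∫⁻ h, G h = ∫⁻ θ : sphere (0 : E) 1, (∫⁻ t : ℝ,
      ENNReal.ofReal (|t| ^ (finrank ℝ E - 1)) * G (t • (θ : E)))
        ∂(volume : Measure E).toSphere := by
  have hneg : ∫⁻ h, G (-h) = ∫⁻ h, G h :=
    (Measure.measurePreserving_neg (volume : Measure E)).lintegral_comp hG
  rw [two_mul]
  nth_rewrite 2 [← hneg]
  rw [lintegral_eq_lintegral_sphere_rays hG,
    lintegral_eq_lintegral_sphere_rays (G := fun h => G (-h)) (by fun_prop),
    ← lintegral_add_left (by fun_prop)]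
  refine lintegral_congr fun θ => ?_
  have hmeas : Measurable fun t : ℝ =>
      ENNReal.ofReal (|t| ^ (finrank ℝ E - 1)) * G (t • (θ : E)) := by fun_prop
  have neg_half := (Measure.measurePreserving_neg (volume : Measure ℝ)).setLIntegral_comp_preimage
    measurableSet_Iio hmeas (s := Iio 0)
  have split := lintegral_add_compl (μ := volume)
    (fun t : ℝ => ENNReal.ofReal (|t| ^ (finrank ℝ E - 1)) * G (t • (θ : E)))
    (measurableSet_Ioi (a := (0 : ℝ)))
  rw [← split, compl_Ioi, ← restrict_Iio_eq_restrict_Iic, ← neg_half]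
  simp only [neg_preimage, neg_Iio, neg_zero]
  congr 1 <;> refine setLIntegral_congr_fun measurableSet_Ioi fun t (ht : 0 < t) => ?_
  · simp [abs_of_pos ht]
  · simp [abs_of_pos ht]

/-- The surface area of the unit sphere of `E`. -/
def unitSphereArea (E : Type*) [NormedAddCommGroup E] [InnerProductSpace ℝ E]
    [FiniteDimensional ℝ E] [MeasurableSpace E] [BorelSpace E] : ℝ :=
  (volume : Measure E).toSphere.real univ

lemma lintegral_line_abs_pow_mul_indicator_ball_diff_closedBall [Nontrivial E] {c₁ c₂ x θ : E}
    {R₁ R₂ : ℝ} (hx : x ∈ ball c₂ R₂) (hsub : closedBall c₂ R₂ ⊆ ball c₁ R₁) (hθ : ‖θ‖ = 1) :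
    ∫⁻ t : ℝ, ENNReal.ofReal (|t| ^ (finrank ℝ E - 1)) * (ball c₁ R₁ \ closedBall c₂ R₂).indicator
        (fun z => ENNReal.ofReal (‖z - x‖ ^ finrank ℝ E)⁻¹) (t • θ + x) =
      ENNReal.ofReal (log ((R₁ ^ 2 - ‖x - c₁‖ ^ 2) / (R₂ ^ 2 - ‖x - c₂‖ ^ 2))) := by
  set S := ball c₁ R₁ \ closedBall c₂ R₂
  have hS : MeasurableSet S := measurableSet_ball.diff measurableSet_closedBall
  set L := {t : ℝ | t • θ + x ∈ S}
  have hL : MeasurableSet L := (by fun_prop : Measurable fun t : ℝ => t • θ + x) hS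
  rw [← lintegral_line_ball_diff_closedBall hx hsub hθ, ← lintegral_indicator hL]
  refine lintegral_congr fun t => ?_
  have mem_L : t ∈ L ↔ t • θ + x ∈ S := Iff.rfl
  by_cases ht : t • θ + x ∈ S
  · have ht0 : t ≠ 0 := by
      rintro rfl
      rw [zero_smul, zero_add] at ht
      exact ht.2 (ball_subset_closedBall hx)
    rw [indicator_of_mem ht, indicator_of_mem (mem_L.2 ht),
      ← ENNReal.ofReal_mul (by positivity), add_sub_cancel_right, norm_smul, hθ, mul_one,
      norm_eq_abs]
    congr 1
    rw [← div_eq_mul_inv, div_eq_iff (by positivity), inv_mul_eq_div,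
      eq_div_iff (by positivity), ← pow_succ, Nat.sub_add_cancel finrank_pos]
  · rw [indicator_of_notMem ht, mul_zero, indicator_of_notMem (mt mem_L.1 ht)]

lemma lintegral_ball_diff_closedBall_inv_norm_pow [Nontrivial E] {c₁ c₂ x : E} {R₁ R₂ : ℝ}
    (hx : x ∈ ball c₂ R₂) (hsub : closedBall c₂ R₂ ⊆ ball c₁ R₁) :
    ∫⁻ z in ball c₁ R₁ \ closedBall c₂ R₂, ENNReal.ofReal (‖z - x‖ ^ finrank ℝ E)⁻¹ =
      ENNReal.ofReal (unitSphereArea E / 2 *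
        log ((R₁ ^ 2 - ‖x - c₁‖ ^ 2) / (R₂ ^ 2 - ‖x - c₂‖ ^ 2))) := by
  have hS : MeasurableSet (ball c₁ R₁ \ closedBall c₂ R₂) :=
    measurableSet_ball.diff measurableSet_closedBall
  set G : E → ENNReal := (ball c₁ R₁ \ closedBall c₂ R₂).indicator
    fun z => ENNReal.ofReal (‖z - x‖ ^ finrank ℝ E)⁻¹ with hG
  have hGm : Measurable G := Measurable.indicator (by fun_prop) hS
  have on_line (θ : sphere (0 : E) 1) :=
    lintegral_line_abs_pow_mul_indicator_ball_diff_closedBall hx hsub (norm_eq_of_mem_sphere θ)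
  have hlines := two_mul_lintegral_eq_lintegral_sphere_lines
    (hGm.comp (measurable_add_const x))
  simp only [Function.comp_apply, hG, on_line, lintegral_const] at hlines
  rw [lintegral_add_right_eq_self _ x, lintegral_indicator hS] at hlines
  rw [← ENNReal.mul_right_inj two_ne_zero ENNReal.ofNat_ne_top, hlines,
    ← ofReal_measureReal, ← ENNReal.ofReal_mul' (by positivity), ← ENNReal.ofReal_ofNat,
    ← ENNReal.ofReal_mul zero_le_two, unitSphereArea]
  ring_nf

end

/-! ### Inversion -/

section

open EuclideanGeometry (inversion)

variable {E : Type*} [NormedAddCommGroup E] [InnerProductSpace ℝ E]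

/- Membership of `z` in the ball is positivity of `ρ ^ 2 - ‖z - c‖ ^ 2`, so the identity exhibits
the ball of centre `c'` and radius `ρ'` as the preimage under the inversion. -/
lemma exists_ball_image_inversion {c y : E} {ρ R : ℝ} (hρ : 0 ≤ ρ) (hy : y ∉ closedBall c ρ)
    (hR : R ≠ 0) :
    ∃ (c' : E) (ρ' : ℝ), 0 ≤ ρ' ∧ y ∉ closedBall c' ρ' ∧ ∀ ζ ≠ y,
      (ρ ^ 2 - ‖inversion y R ζ - c‖ ^ 2) * ‖ζ - y‖ ^ 2 =
        (‖y - c‖ ^ 2 - ρ ^ 2) * (ρ' ^ 2 - ‖ζ - c'‖ ^ 2) := by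
  have hα : 0 < ‖y - c‖ ^ 2 - ρ ^ 2 := by
    rw [mem_closedBall_iff_sq_sub_norm_sq_nonneg hρ] at hy
    linarith
  set α := ‖y - c‖ ^ 2 - ρ ^ 2 with hα_def
  refine ⟨y - (R ^ 2 / α) • (y - c), R ^ 2 * ρ / α, by positivity, ?_, fun ζ hζ => ?_⟩
  · rw [mem_closedBall_iff_sq_sub_norm_sq_nonneg (by positivity), sub_sub_cancel, norm_smul,
      norm_of_nonneg (by positivity), not_le]
    have : (R ^ 2 * ρ / α) ^ 2 - (R ^ 2 / α * ‖y - c‖) ^ 2 = -(R ^ 4 / α) := by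
      field_simp
      linear_combination -hα_def
    rw [this, neg_lt_zero]
    positivity
  · have hu : ‖ζ - y‖ ≠ 0 := norm_ne_zero_iff.2 (sub_ne_zero.2 hζ)
    have hinv : inversion y R ζ - c = (R / ‖ζ - y‖) ^ 2 • (ζ - y) + (y - c) := by
      rw [EuclideanGeometry.inversion, dist_eq_norm, vsub_eq_sub, vadd_eq_add, add_sub_assoc]
    have hc' : ζ - (y - (R ^ 2 / α) • (y - c)) = (ζ - y) + (R ^ 2 / α) • (y - c) := by abel
    rw [hinv, hc', norm_add_sq_real, norm_add_sq_real, norm_smul, norm_smul,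
      real_inner_smul_left, real_inner_smul_right, norm_of_nonneg (by positivity),
      norm_of_nonneg (by positivity)]
    field_simp
    linear_combination (R ^ 4 - α * ‖ζ - y‖ ^ 2) * hα_def

lemma exists_ball_preimage_inversion_dist {c x y : E} {ρ : ℝ} (hρ : 0 ≤ ρ)
    (hy : y ∉ closedBall c ρ) (hxy : x ≠ y) :
    ∃ (c' : E) (ρ' : ℝ), y ∉ closedBall c' ρ' ∧
      (∀ ζ ≠ y, inversion y (dist x y) ζ ∈ ball c ρ ↔ ζ ∈ ball c' ρ') ∧
      (∀ ζ ≠ y, inversion y (dist x y) ζ ∈ closedBall c ρ ↔ ζ ∈ closedBall c' ρ') ∧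
      ρ' ^ 2 - ‖x - c'‖ ^ 2 =
        dist x y ^ 2 * ((ρ ^ 2 - ‖x - c‖ ^ 2) / (‖y - c‖ ^ 2 - ρ ^ 2)) := by
  obtain ⟨c', ρ', hρ', hy', power⟩ := exists_ball_image_inversion hρ hy (dist_ne_zero.2 hxy)
  have hα : 0 < ‖y - c‖ ^ 2 - ρ ^ 2 := by
    rw [mem_closedBall_iff_sq_sub_norm_sq_nonneg hρ] at hy
    linarith
  have sq_pos {ζ : E} (hζ : ζ ≠ y) : 0 < ‖ζ - y‖ ^ 2 := by
    have := norm_pos_iff.2 (sub_ne_zero.2 hζ)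
    positivity
  refine ⟨c', ρ', hy', fun ζ hζ => ?_, fun ζ hζ => ?_, ?_⟩
  · rw [mem_ball_iff_sq_sub_norm_sq_pos hρ, mem_ball_iff_sq_sub_norm_sq_pos hρ',
      ← mul_pos_iff_of_pos_right (sq_pos hζ), power ζ hζ, mul_pos_iff_of_pos_left hα]
  · rw [mem_closedBall_iff_sq_sub_norm_sq_nonneg hρ, mem_closedBall_iff_sq_sub_norm_sq_nonneg hρ',
      ← mul_nonneg_iff_of_pos_right (sq_pos hζ), power ζ hζ, mul_nonneg_iff_of_pos_left hα]
  · have hx := power x hxy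
    rw [EuclideanGeometry.inversion_dist_center y x] at hx
    rw [dist_eq_norm, mul_div_assoc', eq_div_iff hα.ne']
    linear_combination -hx

lemma exists_ball_diff_closedBall_image_inversion {c₁ c₂ x y : E} {R₁ R₂ : ℝ}
    (hx : x ∈ ball c₂ R₂) (hsub : closedBall c₂ R₂ ⊆ ball c₁ R₁) (hy : y ∉ closedBall c₁ R₁) :
    ∃ (c₁' c₂' : E) (R₁' R₂' : ℝ), x ∈ ball c₂' R₂' ∧ closedBall c₂' R₂' ⊆ ball c₁' R₁' ∧
      y ∉ closedBall c₁' R₁' ∧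
      inversion y (dist x y) '' (ball c₁' R₁' \ closedBall c₂' R₂') =
        ball c₁ R₁ \ closedBall c₂ R₂ ∧
      (R₁' ^ 2 - ‖x - c₁'‖ ^ 2) / (R₂' ^ 2 - ‖x - c₂'‖ ^ 2) =
        (R₁ ^ 2 - ‖x - c₁‖ ^ 2) / (‖y - c₁‖ ^ 2 - R₁ ^ 2) /
          ((R₂ ^ 2 - ‖x - c₂‖ ^ 2) / (‖y - c₂‖ ^ 2 - R₂ ^ 2)) := by
  have hx₁ : x ∈ closedBall c₁ R₁ := ball_subset_closedBall (hsub (ball_subset_closedBall hx))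
  have hy₂ : y ∉ closedBall c₂ R₂ := fun h => hy (ball_subset_closedBall (hsub h))
  have hxy : x ≠ y := ne_of_mem_of_not_mem hx₁ hy
  have hR : dist x y ≠ 0 := dist_ne_zero.2 hxy
  obtain ⟨c₁', R₁', hy₁', mem_ball₁, -, power₁⟩ :=
    exists_ball_preimage_inversion_dist (dist_nonneg.trans hx₁) hy hxy
  obtain ⟨c₂', R₂', hy₂', mem_ball₂, mem_closedBall₂, power₂⟩ :=
    exists_ball_preimage_inversion_dist (pos_of_mem_ball hx).le hy₂ hxy
  refine ⟨c₁', c₂', R₁', R₂', ?_, fun ζ hζ => ?_, hy₁', ?_, ?_⟩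
  · rwa [← mem_ball₂ x hxy, EuclideanGeometry.inversion_dist_center y x]
  · have hζy : ζ ≠ y := ne_of_mem_of_not_mem hζ hy₂'
    exact (mem_ball₁ ζ hζy).1 (hsub ((mem_closedBall₂ ζ hζy).2 hζ))
  · rw [(EuclideanGeometry.inversion_involutive y hR).image_eq_preimage_symm]
    ext ζ
    rcases eq_or_ne ζ y with rfl | hζ
    · rw [mem_preimage, EuclideanGeometry.inversion_self]
      exact iff_of_false (fun h => hy₁' (ball_subset_closedBall h.1))
        (fun h => hy (ball_subset_closedBall h.1))
    · have hinv : inversion y (dist x y) ζ ≠ y :=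
        fun h => hζ ((EuclideanGeometry.inversion_eq_center hR).1 h)
      rw [mem_preimage, Set.mem_sdiff, Set.mem_sdiff, ← mem_ball₁ _ hinv,
        ← mem_closedBall₂ _ hinv, EuclideanGeometry.inversion_inversion y hR ζ]
  · rw [power₁, power₂, mul_div_mul_left _ _ (by positivity)]

lemma inv_norm_pow_mul_inversion {x y ζ : E} (hxy : x ≠ y) (hζ : ζ ≠ y) (d : ℕ) :
    (dist x y / dist ζ y) ^ (2 * d) * ((‖inversion y (dist x y) ζ - x‖ ^ d)⁻¹ *
      (‖inversion y (dist x y) ζ - y‖ ^ d)⁻¹) = (‖x - y‖ ^ d)⁻¹ * (‖ζ - x‖ ^ d)⁻¹ := by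
  have hxy' : dist x y ≠ 0 := dist_ne_zero.2 hxy
  have hζ' : dist ζ y ≠ 0 := dist_ne_zero.2 hζ
  have to_x : ‖inversion y (dist x y) ζ - x‖ = dist x y / dist ζ y * dist ζ x := by
    have hfix : inversion y (dist x y) x = x := EuclideanGeometry.inversion_dist_center y x
    nth_rewrite 2 [← hfix]
    rw [← dist_eq_norm, EuclideanGeometry.dist_inversion_inversion hζ hxy]
    field_simp
  have to_y : ‖inversion y (dist x y) ζ - y‖ = dist x y ^ 2 / dist ζ y := by
    rw [← dist_eq_norm, EuclideanGeometry.dist_inversion_center]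
  rw [to_x, to_y, ← dist_eq_norm, ← dist_eq_norm, pow_mul, ← inv_pow, ← inv_pow, ← inv_pow,
    ← inv_pow, ← mul_pow, ← mul_pow, ← mul_pow]
  congr 1
  field_simp

variable [FiniteDimensional ℝ E]

lemma abs_det_fderiv_inversion (y z : E) (R : ℝ) :
    |((R / dist z y) ^ 2 • ((Submodule.span ℝ {z - y})ᗮ.reflection : E →L[ℝ] E)).det| =
      (R / dist z y) ^ (2 * finrank ℝ E) := by
  have reflection_det : |LinearMap.det
      ((Submodule.span ℝ {z - y})ᗮ.reflection : E →L[ℝ] E).toLinearMap| = 1 := by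
    have := (Submodule.span ℝ {z - y})ᗮ.det_reflection
    rw [show LinearMap.det ((Submodule.span ℝ {z - y})ᗮ.reflection : E →L[ℝ] E).toLinearMap =
      (-1) ^ finrank ℝ (Submodule.span ℝ {z - y})ᗮᗮ from this]
    simp
  rw [ContinuousLinearMap.det, ContinuousLinearMap.toLinearMap_smul, LinearMap.det_smul, abs_mul,
    reflection_det, mul_one, abs_pow, abs_pow, pow_mul, sq_abs]

variable [MeasurableSpace E] [BorelSpace E]

lemma setLIntegral_image_inversion {y : E} {R : ℝ} (hR : R ≠ 0) {S : Set E} (hS : MeasurableSet S)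
    (hy : y ∉ S) (g : E → ENNReal) :
    ∫⁻ z in inversion y R '' S, g z =
      ∫⁻ ζ in S, ENNReal.ofReal ((R / dist ζ y) ^ (2 * finrank ℝ E)) * g (inversion y R ζ) := by
  have := lintegral_image_eq_lintegral_abs_det_fderiv_mul (volume : Measure E) hS
    (fun ζ hζ => (EuclideanGeometry.hasFDerivAt_inversion (R := R)
      (ne_of_mem_of_not_mem hζ hy)).hasFDerivWithinAt)
    (EuclideanGeometry.inversion_injective y hR).injOn g
  simpa only [abs_det_fderiv_inversion] using this

/- Inversion about `y` with radius `dist x y` fixes `x` and absorbs the factor `‖z - y‖ ^ (-d)`. -/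
lemma lintegral_ball_diff_closedBall_inv_norm_pow_mul_inv_norm_pow [Nontrivial E]
    {c₁ c₂ x y : E} {R₁ R₂ : ℝ} (hx : x ∈ ball c₂ R₂) (hsub : closedBall c₂ R₂ ⊆ ball c₁ R₁)
    (hy : y ∉ closedBall c₁ R₁) :
    ∫⁻ z in ball c₁ R₁ \ closedBall c₂ R₂,
        ENNReal.ofReal ((‖z - x‖ ^ finrank ℝ E)⁻¹ * (‖z - y‖ ^ finrank ℝ E)⁻¹) =
      ENNReal.ofReal ((‖x - y‖ ^ finrank ℝ E)⁻¹ * (unitSphereArea E / 2 *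
        log ((R₁ ^ 2 - ‖x - c₁‖ ^ 2) / (‖y - c₁‖ ^ 2 - R₁ ^ 2) /
          ((R₂ ^ 2 - ‖x - c₂‖ ^ 2) / (‖y - c₂‖ ^ 2 - R₂ ^ 2))))) := by
  obtain ⟨c₁', c₂', R₁', R₂', hx', hsub', hy', image_eq, power_eq⟩ :=
    exists_ball_diff_closedBall_image_inversion hx hsub hy
  have hxy : x ≠ y :=
    ne_of_mem_of_not_mem (ball_subset_closedBall (hsub (ball_subset_closedBall hx))) hy
  set S' := ball c₁' R₁' \ closedBall c₂' R₂'
  have hyS' : y ∉ S' := fun h => hy' (ball_subset_closedBall h.1)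
  have hS' : MeasurableSet S' := measurableSet_ball.diff measurableSet_closedBall
  rw [← image_eq, setLIntegral_image_inversion (dist_ne_zero.2 hxy) hS' hyS',
    setLIntegral_congr_fun hS' fun ζ hζ => by
      rw [← ENNReal.ofReal_mul (by positivity),
        inv_norm_pow_mul_inversion hxy (ne_of_mem_of_not_mem hζ hyS'),
        ENNReal.ofReal_mul (by positivity)],
    lintegral_const_mul' _ _ ENNReal.ofReal_ne_top,
    lintegral_ball_diff_closedBall_inv_norm_pow hx' hsub', ← ENNReal.ofReal_mul (by positivity),
    power_eq]

end

/-! ### The exterior Poisson kernel -/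

lemma setLIntegral_rpow_mul_of_superlevel {α : Type*} [MeasurableSpace α] {μ : Measure α}
    [SFinite μ] {A : Set α} {f : α → ℝ} {g : α → ENNReal} {s K a b : ℝ} (hs : s ∈ Ioo (0 : ℝ) 1)
    (hA : MeasurableSet A) (hf : Measurable f) (hg : Measurable g) (hf₀ : ∀ z ∈ A, 0 ≤ f z)
    (hK : 0 ≤ K) (hb : 0 ≤ b) (hab : b ≤ a)
    (superlevel : ∀ c : ℝ, 0 < c →
      ∫⁻ z in {z | z ∈ A ∧ c < f z}, g z ∂μ = ENNReal.ofReal (K * log ((a + c) / (b + c)))) :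
    ∫⁻ z in A, ENNReal.ofReal (f z ^ s) * g z ∂μ =
      ENNReal.ofReal (K * (π / sin (π * s)) * (a ^ s - b ^ s)) := by
  set ν := (μ.restrict A).withDensity g with hν
  have superlevel_ν : ∀ c ∈ Ioi (0 : ℝ), ν {z | c < f z} * ENNReal.ofReal (c ^ (s - 1)) =
      ENNReal.ofReal K *
        (ENNReal.ofReal (log ((a + c) / (b + c))) * ENNReal.ofReal (c ^ (s - 1))) := by
    intro c hc
    have hset : MeasurableSet {z | c < f z} := measurableSet_lt measurable_const hf
    rw [hν, withDensity_apply _ hset, Measure.restrict_restrict hset, inter_comm, ← mul_assoc,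
      ← ENNReal.ofReal_mul hK]
    exact congrArg (· * _) (superlevel c hc)
  have layer_cake := lintegral_rpow_eq_lintegral_meas_lt_mul ν (f := f)
    ((withDensity_absolutelyContinuous _ g).ae_le (ae_restrict_of_forall_mem hA hf₀))
    hf.aemeasurable hs.1
  rw [setLIntegral_congr_fun measurableSet_Ioi superlevel_ν,
    lintegral_const_mul' _ _ ENNReal.ofReal_ne_top, lintegral_log_div_mul_rpow hs hb hab,
    hν, lintegral_withDensity_eq_lintegral_mul _ hg (by fun_prop), ← ENNReal.ofReal_mul hK,
    ← ENNReal.ofReal_mul hs.1.le] at layer_cake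
  simp only [Pi.mul_apply, mul_comm (g _)] at layer_cake
  rw [layer_cake]
  have := hs.1
  congr 1
  field_simp

section

variable (E : Type*) [NormedAddCommGroup E] [InnerProductSpace ℝ E]
  [FiniteDimensional ℝ E] [MeasurableSpace E] [BorelSpace E] [Nontrivial E]

lemma Bns_mul_unitSphereArea {s : ℝ} (hs : s ∈ Ioo (0 : ℝ) 1) :
    Bns (finrank ℝ E) s * (unitSphereArea E / 2 * (π / sin (π * s))) = 1 := by
  have hd : (0 : ℝ) < finrank ℝ E := by exact_mod_cast finrank_pos
  have hsin : 0 < sin (π * s) :=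
    sin_pos_of_pos_of_lt_pi (mul_pos pi_pos hs.1) (by nlinarith [pi_pos, hs.2])
  have : 0 < Gamma ((finrank ℝ E : ℝ) / 2) := Gamma_pos_of_pos (by positivity)
  rw [Bns, unitSphereArea, Measure.toSphere_real_apply_univ, measureReal_def,
    InnerProductSpace.volume_ball, Gamma_add_one (by positivity), rpow_add_one (by positivity),
    sqrt_eq_rpow, ← rpow_mul_natCast pi_pos.le, one_div_mul_eq_div]
  simp only [ENNReal.ofReal_one, one_pow, one_mul]
  rw [ENNReal.toReal_ofReal (by positivity)]
  field_simp

end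

lemma Bns_pos {n : ℕ} (hn : 0 < n) {s : ℝ} (hs : s ∈ Ioo (0 : ℝ) 1) : 0 < Bns n s := by
  have : (0 : ℝ) < n := by exact_mod_cast hn
  have hsin : 0 < sin (π * s) :=
    sin_pos_of_pos_of_lt_pi (mul_pos pi_pos hs.1) (by nlinarith [pi_pos, hs.2])
  have : 0 < Gamma ((n : ℝ) / 2) := Gamma_pos_of_pos (by positivity)
  unfold Bns
  positivity

section

variable {E : Type*} [NormedAddCommGroup E]

lemma div_sq_sub_sq_le_div {x y : E} {r ρ : ℝ} (hρ : 0 < ρ) (hx : ‖x‖ + ρ < r) (hy : r < ‖y‖) :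
    (‖y‖ ^ 2 - r ^ 2) / (‖y - x‖ ^ 2 - ρ ^ 2) ≤ (r ^ 2 - ‖x‖ ^ 2) / ρ ^ 2 := by
  have htri : ‖y‖ - ‖x‖ ≤ ‖y - x‖ := norm_sub_norm_le y x
  have hx0 := norm_nonneg x
  have hm : 0 < r ^ 2 - ‖x‖ ^ 2 := by nlinarith
  have hD : (‖y‖ - ‖x‖) ^ 2 ≤ ‖y - x‖ ^ 2 := pow_le_pow_left₀ (by linarith) htri 2
  have hρsq : ρ ^ 2 ≤ (r - ‖x‖) ^ 2 := pow_le_pow_left₀ hρ.le (by linarith) 2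
  rw [div_le_div_iff₀ (by nlinarith) (by positivity)]
  have key : ρ ^ 2 * (‖y‖ ^ 2 - ‖x‖ ^ 2) ≤ (r ^ 2 - ‖x‖ ^ 2) * (‖y‖ - ‖x‖) ^ 2 := by
    calc ρ ^ 2 * (‖y‖ ^ 2 - ‖x‖ ^ 2) ≤ (r - ‖x‖) ^ 2 * (‖y‖ ^ 2 - ‖x‖ ^ 2) := by
          gcongr
          nlinarith
      _ = (r - ‖x‖) * (‖y‖ - ‖x‖) * ((r - ‖x‖) * (‖y‖ + ‖x‖)) := by ring
      _ ≤ (r - ‖x‖) * (‖y‖ - ‖x‖) * ((r + ‖x‖) * (‖y‖ - ‖x‖)) := by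
          refine mul_le_mul_of_nonneg_left ?_ (mul_nonneg (by linarith) (by linarith))
          nlinarith
      _ = (r ^ 2 - ‖x‖ ^ 2) * (‖y‖ - ‖x‖) ^ 2 := by ring
  nlinarith [mul_le_mul_of_nonneg_left hD hm.le]

end

section

variable {E : Type*} [NormedAddCommGroup E] [InnerProductSpace ℝ E]

lemma exists_ball_sq_sub_norm_sq_sub_mul {x : E} {r ρ c : ℝ} (hx : ‖x‖ < r) (hc : 0 < c) :
    ∃ (c' : E) (R' : ℝ), 0 ≤ R' ∧ ∀ z : E,
      r ^ 2 - ‖z‖ ^ 2 - c * (‖z - x‖ ^ 2 - ρ ^ 2) = (1 + c) * (R' ^ 2 - ‖z - c'‖ ^ 2) := by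
  set k := c / (1 + c) with hk
  have hk0 : 0 < k := by positivity
  have hk1 : k < 1 := by rw [hk, div_lt_one (by positivity)]; linarith
  have hpow : 0 < r ^ 2 - ‖x‖ ^ 2 := by nlinarith [norm_nonneg x]
  have hR' : 0 ≤ (1 - k) * (r ^ 2 - ‖x‖ ^ 2) + k * ρ ^ 2 + (1 - k) ^ 2 * ‖x‖ ^ 2 := by
    have := mul_pos (sub_pos.2 hk1) hpow
    positivity
  refine ⟨k • x, √((1 - k) * (r ^ 2 - ‖x‖ ^ 2) + k * ρ ^ 2 + (1 - k) ^ 2 * ‖x‖ ^ 2),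
    sqrt_nonneg _, fun z => ?_⟩
  rw [sq_sqrt hR', norm_sub_sq_real, norm_sub_sq_real, real_inner_smul_right, norm_smul,
    norm_of_nonneg hk0.le, hk]
  field_simp
  ring

lemma exists_ball_superlevel_eq {x y : E} {r ρ c : ℝ} (hρ : 0 < ρ) (hx : ‖x‖ + ρ < r)
    (hy : r < ‖y‖) (hc : 0 < c) :
    ∃ (c' : E) (R' : ℝ), closedBall x ρ ⊆ ball c' R' ∧ y ∉ closedBall c' R' ∧
      {z | z ∈ ball 0 r \ closedBall x ρ ∧ c < (r ^ 2 - ‖z‖ ^ 2) / (‖z - x‖ ^ 2 - ρ ^ 2)} =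
        ball c' R' \ closedBall x ρ ∧
      (R' ^ 2 - ‖x - c'‖ ^ 2) / (‖y - c'‖ ^ 2 - R' ^ 2) =
        (r ^ 2 - ‖x‖ ^ 2 + c * ρ ^ 2) / (‖y‖ ^ 2 - r ^ 2 + c * (‖y - x‖ ^ 2 - ρ ^ 2)) := by
  have hr : 0 < r := by linarith [norm_nonneg x]
  obtain ⟨c', R', hR', power⟩ :=
    exists_ball_sq_sub_norm_sq_sub_mul (ρ := ρ) (by linarith : ‖x‖ < r) hc
  have hc1 : 0 < 1 + c := by linarith
  have mem_ball' (z : E) :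
      z ∈ ball c' R' ↔ c * (‖z - x‖ ^ 2 - ρ ^ 2) < r ^ 2 - ‖z‖ ^ 2 := by
    rw [mem_ball_iff_sq_sub_norm_sq_pos hR', ← mul_pos_iff_of_pos_left hc1, ← power, sub_pos]
  have outside {z : E} (hz : z ∉ closedBall x ρ) : 0 < ‖z - x‖ ^ 2 - ρ ^ 2 := by
    rw [mem_closedBall_iff_sq_sub_norm_sq_nonneg hρ.le] at hz
    linarith
  have inside {z : E} (hz : z ∈ closedBall x ρ) : 0 < r ^ 2 - ‖z‖ ^ 2 := by
    have := norm_le_insert' z x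
    rw [mem_closedBall_iff_norm] at hz
    nlinarith [norm_nonneg z]
  have hyρ : y ∉ closedBall x ρ := fun h => by nlinarith [inside h]
  refine ⟨c', R', fun z hz => ?_, ?_, ?_, ?_⟩
  · have := (mem_closedBall_iff_sq_sub_norm_sq_nonneg hρ.le).1 hz
    rw [mem_ball']
    nlinarith [inside hz]
  · rw [mem_closedBall_iff_sq_sub_norm_sq_nonneg hR', ← mul_nonneg_iff_of_pos_left hc1, ← power]
    nlinarith [mul_pos hc (outside hyρ)]
  · ext z
    rw [mem_ofPred_eq, Set.mem_sdiff, Set.mem_sdiff, mem_ball', and_right_comm]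
    refine and_congr_left fun hz => ?_
    rw [lt_div_iff₀ (outside hz), mem_ball_iff_sq_sub_norm_sq_pos hr.le, sub_zero]
    exact and_iff_right_of_imp fun h => (mul_pos hc (outside hz)).trans h
  · rw [← mul_div_mul_left (R' ^ 2 - _) _ hc1.ne', ← power, sub_self, norm_zero,
      show (1 + c) * (‖y - c'‖ ^ 2 - R' ^ 2) = ‖y‖ ^ 2 - r ^ 2 + c * (‖y - x‖ ^ 2 - ρ ^ 2) by
        linear_combination power y]
    ring

end

section

variable {E : Type*} [NormedAddCommGroup E] [InnerProductSpace ℝ E]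

/-- The exterior Poisson kernel `P_r(y, x)` of the ball of radius `r` centred at the origin, for a
pole `x` inside the ball and a point `y` outside it. -/
def exteriorPoissonKernel (s r : ℝ) (x y : E) : ℝ :=
  Bns (finrank ℝ E) s * ((r ^ 2 - ‖x‖ ^ 2) / (‖y‖ ^ 2 - r ^ 2)) ^ s / ‖x - y‖ ^ finrank ℝ E

lemma exteriorPoissonKernel_zero_sub (s ρ : ℝ) (x z : E) :
    exteriorPoissonKernel s ρ 0 (z - x) = Bns (finrank ℝ E) s *
      (ρ ^ 2 / (‖z - x‖ ^ 2 - ρ ^ 2)) ^ s * (‖z - x‖ ^ finrank ℝ E)⁻¹ := by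
  rw [exteriorPoissonKernel, norm_zero, zero_sub, norm_neg, div_eq_mul_inv]
  ring_nf

lemma exteriorPoissonKernel_mul_exteriorPoissonKernel (s : ℝ) {r ρ : ℝ} {x y z : E}
    (hz : z ∈ ball 0 r \ closedBall x ρ) (hρ : 0 < ρ) (hy : r < ‖y‖) :
    exteriorPoissonKernel s ρ 0 (z - x) * exteriorPoissonKernel s r z y =
      Bns (finrank ℝ E) s ^ 2 * (ρ ^ 2 / (‖y‖ ^ 2 - r ^ 2)) ^ s *
        (((r ^ 2 - ‖z‖ ^ 2) / (‖z - x‖ ^ 2 - ρ ^ 2)) ^ s *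
          ((‖z - x‖ ^ finrank ℝ E)⁻¹ * (‖z - y‖ ^ finrank ℝ E)⁻¹)) := by
  have hr : 0 < r := pos_of_mem_ball hz.1
  have hp : 0 < r ^ 2 - ‖z‖ ^ 2 := by
    simpa using (mem_ball_iff_sq_sub_norm_sq_pos hr.le).1 hz.1
  have hq : 0 < ‖z - x‖ ^ 2 - ρ ^ 2 := by
    simpa using (mem_closedBall_iff_sq_sub_norm_sq_nonneg hρ.le).not.1 hz.2
  have hN : 0 < ‖y‖ ^ 2 - r ^ 2 := by nlinarith
  have swap : (ρ ^ 2 / (‖z - x‖ ^ 2 - ρ ^ 2)) ^ s * ((r ^ 2 - ‖z‖ ^ 2) / (‖y‖ ^ 2 - r ^ 2)) ^ s =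
      (ρ ^ 2 / (‖y‖ ^ 2 - r ^ 2)) ^ s *
        ((r ^ 2 - ‖z‖ ^ 2) / (‖z - x‖ ^ 2 - ρ ^ 2)) ^ s := by
    rw [← mul_rpow (by positivity) (by positivity), ← mul_rpow (by positivity) (by positivity),
      div_mul_div_comm, div_mul_div_comm, mul_comm (‖y‖ ^ 2 - r ^ 2)]
  rw [exteriorPoissonKernel_zero_sub, exteriorPoissonKernel,
    div_eq_mul_inv _ (‖z - y‖ ^ _)]
  linear_combination (Bns (finrank ℝ E) s ^ 2 * (‖z - x‖ ^ finrank ℝ E)⁻¹ *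
    (‖z - y‖ ^ finrank ℝ E)⁻¹) * swap

variable [FiniteDimensional ℝ E] [MeasurableSpace E] [BorelSpace E]

@[fun_prop]
lemma measurable_exteriorPoissonKernel (s r : ℝ) :
    Measurable fun p : E × E => exteriorPoissonKernel s r p.1 p.2 := by
  unfold exteriorPoissonKernel
  fun_prop

/-- The extension to the ball of radius `r` centred at the origin, by its Poisson integral, of the
values of `u` outside that ball. It takes values in `[0, ∞]`, so that no integrability is needed. -/
def poissonExtension (s r : ℝ) (u : E → ENNReal) (x : E) : ENNReal :=
  if ‖x‖ < r then
    ∫⁻ y in (closedBall 0 r)ᶜ, ENNReal.ofReal (exteriorPoissonKernel s r x y) * u y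
  else u x

variable [Nontrivial E]

lemma lintegral_exteriorPoissonKernel {s r : ℝ} (hs : s ∈ Ioo (0 : ℝ) 1) {x : E} (hx : ‖x‖ < r) :
    ∫⁻ y in (closedBall 0 r)ᶜ, ENNReal.ofReal (exteriorPoissonKernel s r x y) = 1 := by
  have hr : 0 < r := (norm_nonneg x).trans_lt hx
  have hm : 0 < r ^ 2 - ‖x‖ ^ 2 := by nlinarith [norm_nonneg x]
  have hB := Bns_pos (finrank_pos (R := ℝ) (M := E)) hs
  have outside {y : E} (hy : y ∈ (closedBall (0 : E) r)ᶜ) : 0 < ‖y‖ ^ 2 - r ^ 2 := by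
    rw [mem_compl_iff, mem_closedBall_zero_iff, not_le] at hy
    nlinarith
  have key := setLIntegral_rpow_mul_of_superlevel (μ := (volume : Measure E)) hs
    (A := (closedBall 0 r)ᶜ) (f := fun y => (r ^ 2 - ‖x‖ ^ 2) / (‖y‖ ^ 2 - r ^ 2))
    (g := fun y => ENNReal.ofReal (‖y - x‖ ^ finrank ℝ E)⁻¹) (K := unitSphereArea E / 2)
    (a := 1) (b := 0) measurableSet_closedBall.compl (by fun_prop) (by fun_prop)
    (fun y hy => (div_pos hm (outside hy)).le) (by unfold unitSphereArea; positivity)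
    le_rfl zero_le_one ?_
  · rw [setLIntegral_congr_fun measurableSet_closedBall.compl fun y hy => by
      rw [exteriorPoissonKernel, mul_div_assoc, ENNReal.ofReal_mul hB.le, div_eq_mul_inv,
        ENNReal.ofReal_mul (by have := outside hy; positivity), norm_sub_rev],
      lintegral_const_mul' _ _ ENNReal.ofReal_ne_top, key, ← ENNReal.ofReal_mul hB.le,
      one_rpow, zero_rpow hs.1.ne', sub_zero, mul_one, Bns_mul_unitSphereArea E hs,
      ENNReal.ofReal_one]
  · intro c hc
    have hR : 0 ≤ r ^ 2 + (r ^ 2 - ‖x‖ ^ 2) / c := by positivity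
    have hset : {y | y ∈ (closedBall (0 : E) r)ᶜ ∧ c < (r ^ 2 - ‖x‖ ^ 2) / (‖y‖ ^ 2 - r ^ 2)} =
        ball 0 √(r ^ 2 + (r ^ 2 - ‖x‖ ^ 2) / c) \ closedBall 0 r := by
      ext y
      rw [mem_ofPred_eq, Set.mem_sdiff, and_comm]
      refine and_congr_left fun hy => ?_
      rw [mem_ball_iff_sq_sub_norm_sq_pos (sqrt_nonneg _), sq_sqrt hR, sub_zero,
        lt_div_comm₀ hc (outside hy)]
      constructor <;> intro h <;> linarith
    have hsub : closedBall (0 : E) r ⊆ ball 0 √(r ^ 2 + (r ^ 2 - ‖x‖ ^ 2) / c) :=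
      closedBall_subset_ball (lt_sqrt_of_sq_lt (lt_add_of_pos_right _ (by positivity)))
    rw [hset, lintegral_ball_diff_closedBall_inv_norm_pow (by simpa using hx) hsub, sq_sqrt hR,
      sub_zero]
    congr 3
    field_simp
    ring

lemma lintegral_superlevel_ball_diff_closedBall {x y : E} {r ρ c : ℝ} (hρ : 0 < ρ)
    (hx : ‖x‖ + ρ < r) (hy : r < ‖y‖) (hc : 0 < c) :
    ∫⁻ z in {z | z ∈ ball 0 r \ closedBall x ρ ∧
        c < (r ^ 2 - ‖z‖ ^ 2) / (‖z - x‖ ^ 2 - ρ ^ 2)},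
        ENNReal.ofReal ((‖z - x‖ ^ finrank ℝ E)⁻¹ * (‖z - y‖ ^ finrank ℝ E)⁻¹) =
      ENNReal.ofReal ((‖x - y‖ ^ finrank ℝ E)⁻¹ * (unitSphereArea E / 2) *
        log (((r ^ 2 - ‖x‖ ^ 2) / ρ ^ 2 + c) /
          ((‖y‖ ^ 2 - r ^ 2) / (‖y - x‖ ^ 2 - ρ ^ 2) + c))) := by
  obtain ⟨c', R', hsub, hy', hset, hratio⟩ := exists_ball_superlevel_eq hρ hx hy hc
  have hD : 0 < ‖y - x‖ ^ 2 - ρ ^ 2 := by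
    have := norm_sub_norm_le y x
    nlinarith [norm_nonneg x]
  have hN : 0 < ‖y‖ ^ 2 - r ^ 2 := by nlinarith [norm_nonneg x]
  rw [hset, lintegral_ball_diff_closedBall_inv_norm_pow_mul_inv_norm_pow (mem_ball_self hρ) hsub
    hy', mul_assoc, hratio]
  simp only [sub_self, norm_zero]
  congr 4
  field_simp
  ring

lemma div_rpow_mul_sub_div_rpow {a b c d : ℝ} (s : ℝ) (ha : 0 ≤ a) (hb : 0 < b) (hc : 0 < c)
    (hd : 0 < d) :
    (b / c) ^ s * ((a / b) ^ s - (c / d) ^ s) = (a / c) ^ s - (b / d) ^ s := by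
  rw [mul_sub, ← mul_rpow (by positivity) (by positivity),
    ← mul_rpow (by positivity) (by positivity)]
  congr 2 <;> field_simp

lemma setLIntegral_exteriorPoissonKernel_mul {s r ρ : ℝ} (hs : s ∈ Ioo (0 : ℝ) 1) {x y : E}
    (hρ : 0 < ρ) (hx : ‖x‖ + ρ < r) (hy : r < ‖y‖) :
    ∫⁻ z in ball 0 r \ closedBall x ρ,
        ENNReal.ofReal (exteriorPoissonKernel s ρ 0 (z - x) * exteriorPoissonKernel s r z y) =
      ENNReal.ofReal (exteriorPoissonKernel s r x y - exteriorPoissonKernel s ρ 0 (y - x)) := by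
  have hr : 0 < r := by linarith [norm_nonneg x]
  have hm : 0 < r ^ 2 - ‖x‖ ^ 2 := by nlinarith [norm_nonneg x]
  have hN : 0 < ‖y‖ ^ 2 - r ^ 2 := by nlinarith
  have hD : 0 < ‖y - x‖ ^ 2 - ρ ^ 2 := by
    have := norm_sub_norm_le y x
    nlinarith [norm_nonneg x]
  have hA : MeasurableSet (ball (0 : E) r \ closedBall x ρ) :=
    measurableSet_ball.diff measurableSet_closedBall
  have hB := Bns_pos (finrank_pos (R := ℝ) (M := E)) hs
  have hquot : ∀ z ∈ ball (0 : E) r \ closedBall x ρ,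
      0 ≤ (r ^ 2 - ‖z‖ ^ 2) / (‖z - x‖ ^ 2 - ρ ^ 2) := fun z hz => by
    rw [Set.mem_sdiff, mem_ball_iff_sq_sub_norm_sq_pos hr.le,
      mem_closedBall_iff_sq_sub_norm_sq_nonneg hρ.le, sub_zero, not_le] at hz
    exact div_nonneg hz.1.le (by linarith [hz.2])
  have hscale := div_rpow_mul_sub_div_rpow s hm.le (pow_pos hρ 2) hN hD
  rw [setLIntegral_congr_fun hA fun z hz => by
      rw [exteriorPoissonKernel_mul_exteriorPoissonKernel s hz hρ hy,
        ENNReal.ofReal_mul (by positivity), ENNReal.ofReal_mul (rpow_nonneg (hquot z hz) s)],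
    lintegral_const_mul' _ _ ENNReal.ofReal_ne_top,
    setLIntegral_rpow_mul_of_superlevel hs hA (by fun_prop) (by fun_prop) hquot
      (by unfold unitSphereArea; positivity) (by positivity) (div_sq_sub_sq_le_div hρ hx hy)
      fun c hc => lintegral_superlevel_ball_diff_closedBall hρ hx hy hc,
    ← ENNReal.ofReal_mul (by positivity), exteriorPoissonKernel_zero_sub, exteriorPoissonKernel,
    div_eq_mul_inv _ (‖x - y‖ ^ _), norm_sub_rev x y]
  congr 1
  linear_combination (Bns (finrank ℝ E) s * (‖y - x‖ ^ finrank ℝ E)⁻¹) *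
    (Bns_mul_unitSphereArea E hs * (((r ^ 2 - ‖x‖ ^ 2) / (‖y‖ ^ 2 - r ^ 2)) ^ s -
      (ρ ^ 2 / (‖y - x‖ ^ 2 - ρ ^ 2)) ^ s) + (Bns (finrank ℝ E) s *
        (unitSphereArea E / 2 * (π / sin (π * s)))) * hscale)

end

/-! ### Maximum principle for the Poisson extension -/

section

variable {E : Type*} [NormedAddCommGroup E] [InnerProductSpace ℝ E]

lemma tendsto_exteriorPoissonKernel {s r : ℝ} (hs : s ∈ Ioo (0 : ℝ) 1) {x y : E}
    (hxy : x ≠ y) :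
    Tendsto (fun z => exteriorPoissonKernel s r z y) (nhds x)
      (nhds (exteriorPoissonKernel s r x y)) := by
  have : ‖x - y‖ ^ finrank ℝ E ≠ 0 := pow_ne_zero _ (norm_ne_zero_iff.2 (sub_ne_zero.2 hxy))
  have hs' : 0 ≤ s := hs.1.le
  exact ContinuousAt.div (continuousAt_const.mul (ContinuousAt.rpow_const (by fun_prop)
    (.inr hs'))) (by fun_prop) this

variable [FiniteDimensional ℝ E] [Nontrivial E]

lemma exteriorPoissonKernel_pos {s r : ℝ} (hs : s ∈ Ioo (0 : ℝ) 1) {x y : E} (hx : ‖x‖ < r)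
    (hy : r < ‖y‖) : 0 < exteriorPoissonKernel s r x y := by
  have hB := Bns_pos (finrank_pos (R := ℝ) (M := E)) hs
  have hm : 0 < r ^ 2 - ‖x‖ ^ 2 := by nlinarith [norm_nonneg x]
  have hN : 0 < ‖y‖ ^ 2 - r ^ 2 := by nlinarith [norm_nonneg x]
  have hxy : 0 < ‖x - y‖ := norm_sub_pos_iff.2 fun h => by linarith [congrArg norm h]
  unfold exteriorPoissonKernel
  positivity

lemma exteriorPoissonKernel_zero_sub_le {s r ρ : ℝ} (hs : s ∈ Ioo (0 : ℝ) 1) {x y : E}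
    (hρ : 0 < ρ) (hx : ‖x‖ + ρ < r) (hy : r < ‖y‖) :
    exteriorPoissonKernel s ρ 0 (y - x) ≤ exteriorPoissonKernel s r x y := by
  have hB := Bns_pos (finrank_pos (R := ℝ) (M := E)) hs
  have hN : 0 < ‖y‖ ^ 2 - r ^ 2 := by nlinarith [norm_nonneg x]
  have hD : 0 < ‖y - x‖ ^ 2 - ρ ^ 2 := by
    have := norm_sub_norm_le y x
    nlinarith [norm_nonneg x]
  have hquot : ρ ^ 2 / (‖y - x‖ ^ 2 - ρ ^ 2) ≤ (r ^ 2 - ‖x‖ ^ 2) / (‖y‖ ^ 2 - r ^ 2) := by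
    have := div_sq_sub_sq_le_div hρ hx hy
    rw [div_le_div_iff₀ (by positivity) (by positivity)] at this ⊢
    linarith
  rw [exteriorPoissonKernel_zero_sub, exteriorPoissonKernel, ← div_eq_mul_inv, norm_sub_rev x]
  have := hs.1.le
  gcongr

lemma exteriorPoissonKernel_le_of_norm_le_mul {s r A : ℝ} (hs : s ∈ Ioo (0 : ℝ) 1) {x y : E}
    (hx : ‖x‖ < r) (hy : r < ‖y‖) (hA : ‖y‖ ≤ A * ‖x - y‖) :
    exteriorPoissonKernel s r x y ≤
      A ^ finrank ℝ E * ((r ^ 2 - ‖x‖ ^ 2) / r ^ 2) ^ s * exteriorPoissonKernel s r 0 y := by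
  have hr : 0 < r := (norm_nonneg x).trans_lt hx
  have hB := Bns_pos (finrank_pos (R := ℝ) (M := E)) hs
  have hm : 0 < r ^ 2 - ‖x‖ ^ 2 := by nlinarith [norm_nonneg x]
  have hN : 0 < ‖y‖ ^ 2 - r ^ 2 := by nlinarith
  have hxy : 0 < ‖x - y‖ := norm_sub_pos_iff.2 fun h => by linarith [congrArg norm h]
  have hdist : 1 / ‖x - y‖ ^ finrank ℝ E ≤ A ^ finrank ℝ E / ‖y‖ ^ finrank ℝ E := by
    have hy0 : 0 < ‖y‖ := hr.trans hy
    rw [div_le_div_iff₀ (by positivity) (by positivity), one_mul, ← mul_pow]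
    gcongr
  have hquot : ((r ^ 2 - ‖x‖ ^ 2) / (‖y‖ ^ 2 - r ^ 2)) ^ s =
      ((r ^ 2 - ‖x‖ ^ 2) / r ^ 2) ^ s * (r ^ 2 / (‖y‖ ^ 2 - r ^ 2)) ^ s := by
    rw [← mul_rpow (by positivity) (by positivity), div_mul_div_cancel₀ (by positivity)]
  rw [exteriorPoissonKernel, exteriorPoissonKernel, hquot, div_eq_mul_one_div, norm_zero, zero_sub,
    norm_neg, zero_pow two_ne_zero, sub_zero]
  calc _ ≤ Bns (finrank ℝ E) s * (((r ^ 2 - ‖x‖ ^ 2) / r ^ 2) ^ s *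
        (r ^ 2 / (‖y‖ ^ 2 - r ^ 2)) ^ s) * (A ^ finrank ℝ E / ‖y‖ ^ finrank ℝ E) := by gcongr
    _ = _ := by ring

variable [MeasurableSpace E] [BorelSpace E]

lemma setLIntegral_exteriorPoissonKernel_mul_poissonExtension {s r ρ : ℝ}
    (hs : s ∈ Ioo (0 : ℝ) 1) {u : E → ENNReal} (hu : Measurable u) {x : E} (hρ : 0 < ρ)
    (hx : ‖x‖ + ρ < r) :
    ∫⁻ z in ball 0 r \ closedBall x ρ,
        ENNReal.ofReal (exteriorPoissonKernel s ρ 0 (z - x)) * poissonExtension s r u z =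
      ∫⁻ y in (closedBall 0 r)ᶜ, ENNReal.ofReal
        (exteriorPoissonKernel s r x y - exteriorPoissonKernel s ρ 0 (y - x)) * u y := by
  have hA : MeasurableSet (ball (0 : E) r \ closedBall x ρ) :=
    measurableSet_ball.diff measurableSet_closedBall
  calc _ = ∫⁻ z in ball 0 r \ closedBall x ρ, ∫⁻ y in (closedBall 0 r)ᶜ,
        ENNReal.ofReal (exteriorPoissonKernel s ρ 0 (z - x)) *
          (ENNReal.ofReal (exteriorPoissonKernel s r z y) * u y) := by
        refine setLIntegral_congr_fun hA fun z hz => ?_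
        rw [poissonExtension, if_pos (mem_ball_zero_iff.1 hz.1),
          lintegral_const_mul' _ _ ENNReal.ofReal_ne_top]
    _ = ∫⁻ y in (closedBall 0 r)ᶜ, ∫⁻ z in ball 0 r \ closedBall x ρ,
        ENNReal.ofReal (exteriorPoissonKernel s ρ 0 (z - x)) *
          (ENNReal.ofReal (exteriorPoissonKernel s r z y) * u y) :=
        lintegral_lintegral_swap (by unfold Function.uncurry; fun_prop)
    _ = _ := by
        refine setLIntegral_congr_fun measurableSet_closedBall.compl fun y hy => ?_
        rw [mem_compl_iff, mem_closedBall_zero_iff, not_le] at hy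
        rw [← setLIntegral_exteriorPoissonKernel_mul hs hρ hx hy,
          ← lintegral_mul_const _ (by fun_prop)]
        refine setLIntegral_congr_fun hA fun z hz => ?_
        rw [ENNReal.ofReal_mul' (exteriorPoissonKernel_pos hs (mem_ball_zero_iff.1 hz.1) hy).le,
          mul_assoc]

lemma lintegral_exteriorPoissonKernel_mul_poissonExtension {s r ρ : ℝ} (hs : s ∈ Ioo (0 : ℝ) 1)
    {u : E → ENNReal} (hu : Measurable u) {x : E} (hρ : 0 < ρ) (hx : ‖x‖ + ρ < r) :
    ∫⁻ z in (closedBall x ρ)ᶜ,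
        ENNReal.ofReal (exteriorPoissonKernel s ρ 0 (z - x)) * poissonExtension s r u z =
      poissonExtension s r u x := by
  have hext : MeasurableSet (closedBall (0 : E) r)ᶜ := measurableSet_closedBall.compl
  have norm_lt {z : E} (hz : z ∈ closedBall x ρ) : ‖z‖ < r := by
    have := norm_le_insert' z x
    rw [mem_closedBall_iff_norm] at hz
    linarith
  have split : ((closedBall x ρ)ᶜ : Set E) =ᵐ[volume]
      (ball 0 r \ closedBall x ρ ∪ (closedBall 0 r)ᶜ : Set E) := by
    rw [eventuallyEq_set]
    filter_upwards [compl_mem_ae_iff.2 (Measure.addHaar_sphere volume (0 : E) r)] with z hz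
    rw [mem_compl_iff, mem_sphere_zero_iff_norm] at hz
    simp only [mem_union, Set.mem_sdiff, mem_compl_iff, mem_ball_zero_iff,
      mem_closedBall_zero_iff (r := r), not_le]
    grind
  have hdisj : Disjoint (ball (0 : E) r \ closedBall x ρ) (closedBall 0 r)ᶜ :=
    disjoint_compl_right.mono_left (sdiff_subset.trans ball_subset_closedBall)
  rw [setLIntegral_congr split, lintegral_union hext hdisj,
    setLIntegral_exteriorPoissonKernel_mul_poissonExtension hs hu hρ hx,
    ← lintegral_add_left (by fun_prop), poissonExtension, if_pos (by linarith)]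
  refine setLIntegral_congr_fun hext fun y hy => ?_
  rw [mem_compl_iff, mem_closedBall_zero_iff, not_le] at hy
  have hle := exteriorPoissonKernel_zero_sub_le hs hρ hx hy
  have hpos : 0 < exteriorPoissonKernel s ρ 0 (y - x) :=
    exteriorPoissonKernel_pos hs (by simpa using hρ) (by
      have := norm_sub_norm_le y x
      linarith)
  rw [poissonExtension, if_neg hy.le.not_gt, ← add_mul,
    ← ENNReal.ofReal_add (sub_nonneg.2 hle) hpos.le, sub_add_cancel]

lemma lintegral_exteriorPoissonKernel_diff_ball_le {s r δ : ℝ} (hs : s ∈ Ioo (0 : ℝ) 1)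
    (hδ : 0 < δ) {x₀ x : E} (hx₀ : ‖x₀‖ = r) (hx : ‖x‖ < r) (hxx₀ : x ∈ ball x₀ (δ / 2)) :
    ∫⁻ y in (closedBall 0 r)ᶜ \ ball x₀ δ, ENNReal.ofReal (exteriorPoissonKernel s r x y) ≤
      ENNReal.ofReal ((2 * (1 + r / δ)) ^ finrank ℝ E * ((r ^ 2 - ‖x‖ ^ 2) / r ^ 2) ^ s) := by
  have hr : 0 < r := (norm_nonneg x).trans_lt hx
  have hm : 0 < r ^ 2 - ‖x‖ ^ 2 := by nlinarith [norm_nonneg x]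
  have far {y : E} (hy : y ∉ ball x₀ δ) : ‖y‖ ≤ 2 * (1 + r / δ) * ‖x - y‖ := by
    have h₁ : ‖y‖ ≤ ‖y - x₀‖ + r := by
      have := norm_sub_norm_le y x₀
      linarith
    have h₂ : ‖y - x₀‖ ≤ ‖x - y‖ + ‖x - x₀‖ := by
      rw [norm_sub_rev x y]
      exact norm_sub_le_norm_sub_add_norm_sub ..
    rw [mem_ball_iff_norm, not_lt] at hy
    rw [mem_ball_iff_norm] at hxx₀
    have h₃ : r ≤ r / δ * ‖y - x₀‖ := by
      rw [div_mul_eq_mul_div, le_div_iff₀ hδ]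
      gcongr
    have : 0 < r / δ := by positivity
    nlinarith
  calc _ ≤ ∫⁻ y in (closedBall 0 r)ᶜ \ ball x₀ δ,
        ENNReal.ofReal ((2 * (1 + r / δ)) ^ finrank ℝ E * ((r ^ 2 - ‖x‖ ^ 2) / r ^ 2) ^ s) *
          ENNReal.ofReal (exteriorPoissonKernel s r 0 y) := by
        refine setLIntegral_mono (by fun_prop) fun y hy => ?_
        rw [← ENNReal.ofReal_mul (by positivity)]
        have hry : r < ‖y‖ := by simpa using hy.1
        exact ENNReal.ofReal_le_ofReal
          (exteriorPoissonKernel_le_of_norm_le_mul hs hx hry (far hy.2))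
    _ ≤ ∫⁻ y in (closedBall 0 r)ᶜ,
        ENNReal.ofReal ((2 * (1 + r / δ)) ^ finrank ℝ E * ((r ^ 2 - ‖x‖ ^ 2) / r ^ 2) ^ s) *
          ENNReal.ofReal (exteriorPoissonKernel s r 0 y) := lintegral_mono_set sdiff_subset
    _ = _ := by
        rw [lintegral_const_mul' _ _ ENNReal.ofReal_ne_top,
          lintegral_exteriorPoissonKernel hs (by simpa using hr), mul_one]

lemma lowerSemicontinuousAt_poissonExtension {s r : ℝ} (hs : s ∈ Ioo (0 : ℝ) 1)
    {u : E → ENNReal} (hu : Measurable u) {x₀ : E} (hx₀ : ‖x₀‖ < r) :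
    LowerSemicontinuousAt (poissonExtension s r u) x₀ := by
  have hnhds : ∀ᶠ x in nhds x₀, ‖x‖ < r := continuous_norm.continuousAt.eventually_lt_const hx₀
  rw [lowerSemicontinuousAt_iff_le_liminf, poissonExtension, if_pos hx₀]
  calc ∫⁻ y in (closedBall 0 r)ᶜ, ENNReal.ofReal (exteriorPoissonKernel s r x₀ y) * u y
      = ∫⁻ y in (closedBall 0 r)ᶜ, liminf
          (fun x => ENNReal.ofReal (exteriorPoissonKernel s r x y) * u y) (nhds x₀) := by
        refine setLIntegral_congr_fun measurableSet_closedBall.compl fun y hy => ?_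
        rw [mem_compl_iff, mem_closedBall_zero_iff, not_le] at hy
        have hlim := ENNReal.tendsto_ofReal (tendsto_exteriorPoissonKernel (r := r) hs
          (show x₀ ≠ y by rintro rfl; linarith))
        exact (ENNReal.Tendsto.mul_const hlim
          (.inl (ENNReal.ofReal_pos.2 (exteriorPoissonKernel_pos hs hx₀ hy)).ne')).liminf_eq.symm
    _ ≤ liminf (fun x => ∫⁻ y in (closedBall 0 r)ᶜ,
          ENNReal.ofReal (exteriorPoissonKernel s r x y) * u y) (nhds x₀) :=
        lintegral_liminf_le fun x => by fun_prop
    _ = liminf (poissonExtension s r u) (nhds x₀) := liminf_congr <| by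
        filter_upwards [hnhds] with x hx
        rw [poissonExtension, if_pos hx]

lemma mul_one_sub_le_poissonExtension {s r δ : ℝ} (hs : s ∈ Ioo (0 : ℝ) 1) (hδ : 0 < δ)
    {u : E → ENNReal} {c : ENNReal} {x₀ x : E} (hx₀ : ‖x₀‖ = r) (hx : ‖x‖ < r)
    (hxx₀ : x ∈ ball x₀ (δ / 2)) (hu : ∀ y ∈ ball x₀ δ, c ≤ u y) :
    c * (1 - ENNReal.ofReal
      ((2 * (1 + r / δ)) ^ finrank ℝ E * ((r ^ 2 - ‖x‖ ^ 2) / r ^ 2) ^ s)) ≤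
      poissonExtension s r u x := by
  have near_mass : 1 - ENNReal.ofReal
      ((2 * (1 + r / δ)) ^ finrank ℝ E * ((r ^ 2 - ‖x‖ ^ 2) / r ^ 2) ^ s) ≤
      ∫⁻ y in (closedBall 0 r)ᶜ ∩ ball x₀ δ,
        ENNReal.ofReal (exteriorPoissonKernel s r x y) := by
    rw [tsub_le_iff_right, ← lintegral_exteriorPoissonKernel hs hx,
      ← lintegral_inter_add_sdiff _ _ measurableSet_ball]
    exact add_le_add_right (lintegral_exteriorPoissonKernel_diff_ball_le hs hδ hx₀ hx hxx₀) _
  calc _ ≤ c * ∫⁻ y in (closedBall 0 r)ᶜ ∩ ball x₀ δ,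
        ENNReal.ofReal (exteriorPoissonKernel s r x y) := by gcongr
    _ = ∫⁻ y in (closedBall 0 r)ᶜ ∩ ball x₀ δ,
        ENNReal.ofReal (exteriorPoissonKernel s r x y) * c := by
        rw [lintegral_mul_const _ (by fun_prop), mul_comm]
    _ ≤ ∫⁻ y in (closedBall 0 r)ᶜ ∩ ball x₀ δ,
        ENNReal.ofReal (exteriorPoissonKernel s r x y) * u y :=
        setLIntegral_mono' (measurableSet_closedBall.compl.inter measurableSet_ball)
          fun y hy => by gcongr; exact hu y hy.2
    _ ≤ poissonExtension s r u x := by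
        rw [poissonExtension, if_pos hx]
        exact lintegral_mono_set inter_subset_left

lemma lowerSemicontinuousOn_poissonExtension {s r : ℝ} (hs : s ∈ Ioo (0 : ℝ) 1)
    {u : E → ENNReal} (hu : LowerSemicontinuous u) :
    LowerSemicontinuousOn (poissonExtension s r u) (closedBall 0 r) := by
  intro x₀ hx₀
  rw [mem_closedBall_zero_iff] at hx₀
  obtain hx₀ | hx₀ := hx₀.lt_or_eq
  · have := lowerSemicontinuousAt_poissonExtension hs hu.measurable hx₀
    exact this.lowerSemicontinuousWithinAt _
  intro c hc
  rw [poissonExtension, if_neg hx₀.not_lt] at hc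
  obtain ⟨c', hcc', hc'⟩ := exists_between hc
  obtain ⟨δ, hδ, hball⟩ := Metric.eventually_nhds_iff_ball.1 (hu x₀ c' hc')
  have hlim : Tendsto (fun x : E => c' * (1 - ENNReal.ofReal
      ((2 * (1 + r / δ)) ^ finrank ℝ E * ((r ^ 2 - ‖x‖ ^ 2) / r ^ 2) ^ s))) (nhds x₀)
      (nhds c') := by
    have hpow : Tendsto (fun x : E => ((r ^ 2 - ‖x‖ ^ 2) / r ^ 2) ^ s) (nhds x₀) (nhds 0) := by
      have hcont : Continuous fun x : E => ((r ^ 2 - ‖x‖ ^ 2) / r ^ 2) ^ s :=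
        Continuous.rpow_const (by fun_prop) fun _ => .inr hs.1.le
      simpa [hx₀, zero_rpow hs.1.ne'] using hcont.tendsto x₀
    have hmass := ENNReal.Tendsto.sub (tendsto_const_nhds (x := 1))
      (ENNReal.tendsto_ofReal (hpow.const_mul ((2 * (1 + r / δ)) ^ finrank ℝ E)))
      (.inl ENNReal.one_ne_top)
    simpa using ENNReal.Tendsto.const_mul hmass (.inl (by simp))
  filter_upwards [mem_nhdsWithin_of_mem_nhds (hlim.eventually_const_lt hcc'),
    mem_nhdsWithin_of_mem_nhds (ball_mem_nhds x₀ (half_pos hδ))] with x hx hxx₀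
  by_cases hxr : ‖x‖ < r
  · exact hx.trans_le
      (mul_one_sub_le_poissonExtension hs hδ hx₀ hxr hxx₀ fun y hy => (hball y hy).le)
  · rw [poissonExtension, if_neg hxr]
    exact hcc'.trans (hball x (ball_subset_ball (by linarith) hxx₀))

end

lemma exists_forall_le_add_tsub {α : Type*} [TopologicalSpace α] {K : Set α} {f u : α → ENNReal}
    (hK : IsCompact K) (hf : LowerSemicontinuousOn f K) (hu : ContinuousOn u K)
    (hfin : ∀ z ∈ K, u z ≠ ⊤) {x : α} (hx : x ∈ K) (hlt : f x < u x) :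
    ∃ x₀ ∈ K, f x₀ < u x₀ ∧ ∀ z ∈ K, u z ≤ f z + (u x₀ - f x₀) := by
  obtain ⟨x₁, hx₁, hmax⟩ := hK.exists_isMaxOn ⟨x, hx⟩ hu
  have hM := hfin x₁ hx₁
  have hsub : ContinuousOn (fun z => u x₁ - u z) K := fun z hz =>
    ENNReal.Tendsto.sub tendsto_const_nhds (hu z hz) (.inl hM)
  obtain ⟨x₀, hx₀, hmin⟩ := LowerSemicontinuousOn.exists_isMinOn ⟨x, hx⟩ hK
    (hf.add hsub.lowerSemicontinuousOn)
  have add_sub_lt (z : α) (hz : z ∈ K) : f z + (u x₁ - u z) < u x₁ ↔ f z < u z := by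
    rw [← ENNReal.add_lt_add_iff_right (hfin z hz), add_assoc, tsub_add_cancel_of_le (hmax hz),
      add_comm, ENNReal.add_lt_add_iff_left hM]
  have hlt₀ : f x₀ < u x₀ :=
    (add_sub_lt x₀ hx₀).1 ((hmin hx).trans_lt ((add_sub_lt x hx).2 hlt))
  refine ⟨x₀, hx₀, hlt₀, fun z hz => ?_⟩
  have hle : f x₀ + (u x₁ - u x₀) + (u z + (u x₀ - f x₀)) ≤
      f z + (u x₁ - u z) + (u z + (u x₀ - f x₀)) := add_le_add_left (hmin hz) _
  refine (ENNReal.add_le_add_iff_left hM).1 ?_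
  calc u x₁ + u z = (u x₀ - f x₀ + f x₀) + (u x₁ - u x₀) + u z := by
        rw [tsub_add_cancel_of_le hlt₀.le, add_tsub_cancel_of_le (hmax hx₀)]
    _ = f x₀ + (u x₁ - u x₀) + (u z + (u x₀ - f x₀)) := by ring
    _ ≤ f z + (u x₁ - u z) + (u z + (u x₀ - f x₀)) := hle
    _ = (u x₁ - u z + u z) + (f z + (u x₀ - f x₀)) := by ring
    _ = u x₁ + (f z + (u x₀ - f x₀)) := by rw [tsub_add_cancel_of_le (hmax hz)]

section

variable {E : Type*} [NormedAddCommGroup E] [InnerProductSpace ℝ E]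
  [FiniteDimensional ℝ E] [Nontrivial E] [MeasurableSpace E] [BorelSpace E]

lemma poissonExtension_one {s : ℝ} (hs : s ∈ Ioo (0 : ℝ) 1) (r : ℝ) :
    poissonExtension s r (1 : E → ENNReal) = 1 := by
  ext x
  by_cases hx : ‖x‖ < r
  · simp [poissonExtension, hx, lintegral_exteriorPoissonKernel hs hx]
  · simp [poissonExtension, hx]

lemma lintegral_exteriorPoissonKernel_zero_sub {s ρ : ℝ} (hs : s ∈ Ioo (0 : ℝ) 1) (hρ : 0 < ρ)
    (x : E) :
    ∫⁻ z in (closedBall x ρ)ᶜ, ENNReal.ofReal (exteriorPoissonKernel s ρ 0 (z - x)) = 1 := by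
  simpa [poissonExtension_one hs] using lintegral_exteriorPoissonKernel_mul_poissonExtension hs
    (u := (1 : E → ENNReal)) measurable_one hρ (lt_add_one (‖x‖ + ρ))

/- Outside the ball of radius `r` the function `u` equals its Poisson extension, so there the bound
by `poissonExtension s r u + d` leaves `d` to spare. -/
lemma lintegral_exteriorPoissonKernel_mul_add_le {s r ρ : ℝ} (hs : s ∈ Ioo (0 : ℝ) 1)
    {u : E → ENNReal} (hu : Measurable u) {d : ENNReal} {x : E} (hρ : 0 < ρ) (hx : ‖x‖ + ρ < r)
    (hle : ∀ z ∈ closedBall 0 r, u z ≤ poissonExtension s r u z + d) :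
    (∫⁻ z in (closedBall x ρ)ᶜ, ENNReal.ofReal (exteriorPoissonKernel s ρ 0 (z - x)) * u z) +
        d * ∫⁻ z in (closedBall 0 r)ᶜ, ENNReal.ofReal (exteriorPoissonKernel s ρ 0 (z - x)) ≤
      poissonExtension s r u x + d := by
  set P : E → ENNReal := fun z => ENNReal.ofReal (exteriorPoissonKernel s ρ 0 (z - x))
  have hP : Measurable P := by fun_prop
  have hext : MeasurableSet (closedBall (0 : E) r)ᶜ := measurableSet_closedBall.compl
  have hsub : (closedBall (0 : E) r)ᶜ ⊆ (closedBall x ρ)ᶜ :=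
    compl_subset_compl.2 (closedBall_subset_closedBall' (by
      rw [dist_zero_right]
      linarith))
  have pointwise (z : E) : P z * u z + d * (closedBall 0 r)ᶜ.indicator P z ≤
      P z * poissonExtension s r u z + d * P z := by
    by_cases hz : z ∈ closedBall 0 r
    · rw [indicator_of_notMem (notMem_compl_iff.2 hz), mul_zero, add_zero, mul_comm d, ← mul_add]
      gcongr
      exact hle z hz
    · rw [indicator_of_mem (mem_compl hz), poissonExtension, if_neg]
      rw [mem_closedBall_zero_iff] at hz
      exact fun h => hz h.le
  calc _ = ∫⁻ z in (closedBall x ρ)ᶜ, (P z * u z + d * (closedBall 0 r)ᶜ.indicator P z) := by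
        rw [lintegral_add_left (by fun_prop), lintegral_const_mul _ (hP.indicator hext),
          lintegral_indicator hext, Measure.restrict_restrict hext, inter_eq_left.2 hsub]
    _ ≤ ∫⁻ z in (closedBall x ρ)ᶜ, (P z * poissonExtension s r u z + d * P z) :=
        lintegral_mono pointwise
    _ = _ := by
        rw [lintegral_add_right _ (by fun_prop), lintegral_const_mul _ hP,
          lintegral_exteriorPoissonKernel_mul_poissonExtension hs hu hρ hx,
          lintegral_exteriorPoissonKernel_zero_sub hs hρ, mul_one]

end

/-! ### Convergence of the kernels of shrinking balls -/

section

variable {E : Type*} [NormedAddCommGroup E] [InnerProductSpace ℝ E]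

/-- The kernel of the exterior Poisson integral over the ball of radius `ρ` evaluated at the centre
of that ball, up to a factor depending on `ρ` only. For `ρ = 0` it is the kernel of the fractional
Laplacian. -/
def shiftedRieszKernel (s ρ : ℝ) (h : E) : ℝ :=
  (‖h‖ ^ 2 - ρ ^ 2) ^ (-s) / ‖h‖ ^ finrank ℝ E

@[simp]
lemma shiftedRieszKernel_neg (s ρ : ℝ) (h : E) :
    shiftedRieszKernel s ρ (-h) = shiftedRieszKernel s ρ h := by
  simp [shiftedRieszKernel]

lemma shiftedRieszKernel_pos (s : ℝ) {ρ : ℝ} {h : E} (hρ : 0 ≤ ρ) (hh : ρ < ‖h‖) :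
    0 < shiftedRieszKernel s ρ h :=
  div_pos (rpow_pos_of_pos (sub_pos.2 (pow_lt_pow_left₀ hh hρ two_ne_zero)) _)
    (pow_pos (hρ.trans_lt hh) _)

lemma exteriorPoissonKernel_zero_left (s : ℝ) {ρ : ℝ} {h : E} (hρ : 0 ≤ ρ) (hh : ρ < ‖h‖) :
    exteriorPoissonKernel s ρ 0 h =
      Bns (finrank ℝ E) s * ρ ^ (2 * s) * shiftedRieszKernel s ρ h := by
  have hpos : 0 < ‖h‖ ^ 2 - ρ ^ 2 := sub_pos.2 (pow_lt_pow_left₀ hh hρ two_ne_zero)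
  rw [exteriorPoissonKernel, shiftedRieszKernel, norm_zero, zero_sub, norm_neg,
    zero_pow two_ne_zero, sub_zero, div_rpow (by positivity) hpos.le, rpow_neg hpos.le,
    ← rpow_natCast ρ, ← rpow_mul hρ]
  push_cast
  ring

lemma shiftedRieszKernel_zero (s : ℝ) {h : E} (hh : h ≠ 0) :
    shiftedRieszKernel s 0 h = 1 / ‖h‖ ^ (finrank ℝ E + 2 * s) := by
  have hpos := norm_pos_iff.2 hh
  rw [shiftedRieszKernel, zero_pow two_ne_zero, sub_zero, ← rpow_natCast, ← rpow_natCast,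
    ← rpow_mul hpos.le, ← rpow_sub hpos, one_div, ← rpow_neg hpos.le]
  push_cast
  ring_nf

lemma shiftedRieszKernel_zero_le {s ρ : ℝ} {h : E} (hs : 0 ≤ s) (hρ : 0 ≤ ρ) (hh : ρ < ‖h‖) :
    shiftedRieszKernel s 0 h ≤ shiftedRieszKernel s ρ h := by
  unfold shiftedRieszKernel
  gcongr ?_ / _
  exact rpow_le_rpow_of_nonpos (sub_pos.2 (pow_lt_pow_left₀ hh hρ two_ne_zero)) (by nlinarith)
    (neg_nonpos.2 hs)

lemma shiftedRieszKernel_le_two_rpow_mul {s ρ : ℝ} {h : E} (hs : 0 ≤ s) (hρ : 0 < ρ)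
    (hh : 2 * ρ ≤ ‖h‖) :
    shiftedRieszKernel s ρ h ≤ 2 ^ s * shiftedRieszKernel s 0 h := by
  have hpos : 0 < 2⁻¹ * (‖h‖ ^ 2 - 0 ^ 2) := by nlinarith
  have htwo : (2 : ℝ) ^ s = 2⁻¹ ^ (-s) := by
    rw [rpow_neg (by positivity), inv_rpow two_pos.le, inv_inv]
  rw [shiftedRieszKernel, shiftedRieszKernel, ← mul_div_assoc, htwo,
    ← mul_rpow (by positivity) (by nlinarith)]
  gcongr ?_ / _
  exact rpow_le_rpow_of_nonpos hpos (by nlinarith) (neg_nonpos.2 hs)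

lemma tendsto_shiftedRieszKernel (s : ℝ) {h : E} (hh : h ≠ 0) :
    Tendsto (fun ρ => shiftedRieszKernel s ρ h) (nhds 0) (nhds (shiftedRieszKernel s 0 h)) := by
  refine ContinuousAt.div_const (ContinuousAt.rpow_const (by fun_prop) (.inl ?_)) _
  simpa using hh

@[fun_prop]
lemma measurable_shiftedRieszKernel [MeasurableSpace E] [BorelSpace E] (s ρ : ℝ) :
    Measurable (shiftedRieszKernel s ρ : E → ℝ) := by
  unfold shiftedRieszKernel
  fun_prop

variable [FiniteDimensional ℝ E] [MeasurableSpace E] [BorelSpace E]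

lemma integrableOn_shiftedRieszKernel [Nontrivial E] {s ρ : ℝ} (hs : s ∈ Ioo (0 : ℝ) 1)
    (hρ : 0 < ρ) : IntegrableOn (shiftedRieszKernel s ρ : E → ℝ) (closedBall 0 ρ)ᶜ := by
  have hB := Bns_pos (finrank_pos (R := ℝ) (M := E)) hs
  have hint : IntegrableOn (exteriorPoissonKernel s ρ (0 : E)) (closedBall 0 ρ)ᶜ := by
    refine (lintegral_ofReal_ne_top_iff_integrable (by fun_prop) ?_).1 ?_
    · refine (ae_restrict_iff' measurableSet_closedBall.compl).2 (.of_forall fun h hh => ?_)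
      exact (exteriorPoissonKernel_pos hs (by simpa using hρ) (by simpa using hh)).le
    · simp [lintegral_exteriorPoissonKernel hs (x := (0 : E)) (by simpa using hρ)]
  refine IntegrableOn.congr_fun (hint.const_mul (Bns (finrank ℝ E) s * ρ ^ (2 * s))⁻¹)
    (fun h hh => ?_) measurableSet_closedBall.compl
  rw [mem_compl_iff, mem_closedBall_zero_iff, not_le] at hh
  simp only [exteriorPoissonKernel_zero_left s hρ.le hh]
  field_simp

lemma integrableOn_shiftedRieszKernel_zero [Nontrivial E] {s δ : ℝ} (hs : s ∈ Ioo (0 : ℝ) 1)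
    (hδ : 0 < δ) : IntegrableOn (shiftedRieszKernel s 0 : E → ℝ) (ball 0 δ)ᶜ := by
  have hρ : 0 < δ / 2 := by positivity
  have hsub : (ball (0 : E) δ)ᶜ ⊆ (closedBall 0 (δ / 2))ᶜ :=
    compl_subset_compl.2 (closedBall_subset_ball (by linarith))
  refine ((integrableOn_shiftedRieszKernel hs hρ).mono_set hsub).mono' (by fun_prop) ?_
  refine (ae_restrict_iff' measurableSet_ball.compl).2 (.of_forall fun h hh => ?_)
  have hh' : δ / 2 < ‖h‖ := by simpa using hsub hh
  rw [norm_of_nonneg (shiftedRieszKernel_pos s le_rfl (hρ.trans hh')).le]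
  exact shiftedRieszKernel_zero_le hs.1.le hρ.le hh'

lemma integrableOn_mul_shiftedRieszKernel [Nontrivial E] {s ρ : ℝ} (hs : s ∈ Ioo (0 : ℝ) 1)
    (hρ : 0 < ρ) {f : E → ℝ} (hf : Continuous f)
    (hfar : IntegrableOn (fun h => f h * shiftedRieszKernel s 0 h) (ball 0 (2 * ρ))ᶜ) :
    IntegrableOn (fun h => f h * shiftedRieszKernel s ρ h) (closedBall 0 ρ)ᶜ := by
  have := hf.measurable
  obtain ⟨M, hM⟩ := (isCompact_closedBall (0 : E) (2 * ρ)).exists_bound_of_continuousOn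
    hf.continuousOn
  have near : IntegrableOn (fun h => f h * shiftedRieszKernel s ρ h)
      (ball 0 (2 * ρ) \ closedBall 0 ρ) := by
    refine Integrable.bdd_mul (c := M) ?_ (by fun_prop) ?_
    · exact (integrableOn_shiftedRieszKernel hs hρ).mono_set (sdiff_subset_compl _ _)
    · exact (ae_restrict_iff' (measurableSet_ball.diff measurableSet_closedBall)).2
        (.of_forall fun h hh => hM h (ball_subset_closedBall hh.1))
  have far : IntegrableOn (fun h => f h * shiftedRieszKernel s ρ h) (ball 0 (2 * ρ))ᶜ := by
    refine (hfar.norm.const_mul (2 ^ s)).mono' (by fun_prop) ?_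
    refine (ae_restrict_iff' measurableSet_ball.compl).2 (.of_forall fun h hh => ?_)
    have hh' : 2 * ρ ≤ ‖h‖ := by simpa using hh
    have hpos := shiftedRieszKernel_pos s le_rfl (h := h) (by linarith)
    have hle := shiftedRieszKernel_le_two_rpow_mul hs.1.le hρ hh'
    rw [norm_mul, norm_mul, norm_of_nonneg hpos.le,
      norm_of_nonneg (shiftedRieszKernel_pos s hρ.le (by linarith)).le, mul_left_comm]
    gcongr
  refine (near.union far).mono_set fun h hh => ?_
  by_cases hb : h ∈ ball 0 (2 * ρ)
  · exact .inl ⟨hb, hh⟩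
  · exact .inr hb

end

section

variable {E : Type*} [NormedAddCommGroup E]

lemma one_add_norm_add_rpow_le {a δ : ℝ} (ha : 0 ≤ a) (hδ : 0 < δ) (x : E) {h : E}
    (hh : δ ≤ ‖h‖) :
    1 + ‖x + h‖ ^ a ≤ (δ⁻¹ ^ a + (‖x‖ / δ + 1) ^ a) * ‖h‖ ^ a := by
  have hpos : 0 < ‖h‖ := hδ.trans_le hh
  have hratio : 1 ≤ δ⁻¹ * ‖h‖ := by rwa [inv_mul_eq_div, one_le_div hδ]
  have htri : ‖x + h‖ ≤ (‖x‖ / δ + 1) * ‖h‖ := by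
    calc ‖x + h‖ ≤ ‖x‖ * 1 + ‖h‖ := by simpa using norm_add_le x h
      _ ≤ ‖x‖ * (δ⁻¹ * ‖h‖) + ‖h‖ := by gcongr
      _ = _ := by ring
  rw [add_mul, ← mul_rpow (by positivity) hpos.le, ← mul_rpow (by positivity) hpos.le]
  exact add_le_add (one_le_rpow hratio ha) (rpow_le_rpow (norm_nonneg _) htri ha)

end

section

variable {E : Type*} [NormedAddCommGroup E] [InnerProductSpace ℝ E]
  [FiniteDimensional ℝ E] [MeasurableSpace E] [BorelSpace E]

lemma integrableOn_comp_add_mul_shiftedRieszKernel_zero {s δ : ℝ} (hs : 0 ≤ s) (hδ : 0 < δ)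
    {v : E → ℝ} (hv : Measurable v)
    (hint : Integrable fun y => |v y| / (1 + ‖y‖ ^ (finrank ℝ E + 2 * s))) (x : E) :
    IntegrableOn (fun h => v (x + h) * shiftedRieszKernel s 0 h) (ball 0 δ)ᶜ := by
  set a := finrank ℝ E + 2 * s
  have ha0 : 0 ≤ a := by positivity
  set C := δ⁻¹ ^ a + (‖x‖ / δ + 1) ^ a
  refine ((hint.comp_add_left x).const_mul C).integrableOn.mono' (by fun_prop) ?_
  refine (ae_restrict_iff' measurableSet_ball.compl).2 (.of_forall fun h hh => ?_)
  have hh' : δ ≤ ‖h‖ := by simpa using hh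
  have hpos : 0 < ‖h‖ := hδ.trans_le hh'
  have hweight := one_add_norm_add_rpow_le ha0 hδ x hh'
  rw [norm_mul, norm_of_nonneg (shiftedRieszKernel_pos s le_rfl hpos).le,
    shiftedRieszKernel_zero s (norm_pos_iff.1 hpos), norm_eq_abs, mul_one_div, ← mul_div_assoc,
    div_le_div_iff₀ (by positivity) (by positivity)]
  calc |v (x + h)| * (1 + ‖x + h‖ ^ a) ≤ |v (x + h)| * (C * ‖h‖ ^ a) := by gcongr
    _ = _ := by ring

end

lemma sub_add_sub_le_of_lipschitzOnWith_fderivWithin {E : Type*} [NormedAddCommGroup E]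
    [NormedSpace ℝ E] {v : E → ℝ} {x h : E} {ε : ℝ} {K : NNReal}
    (hd : DifferentiableOn ℝ v (ball x ε))
    (hK : LipschitzOnWith K (fderivWithin ℝ v (ball x ε)) (ball x ε)) (hh : ‖h‖ < ε) :
    v x - v (x + h) + (v x - v (x - h)) ≤ 2 * K * ‖h‖ ^ 2 := by
  set v' := fderivWithin ℝ v (ball x ε)
  have add_mem {y : E} (hy : ‖y‖ < ε) : x + y ∈ ball x ε := by simpa
  have sub_mem {y : E} (hy : ‖y‖ < ε) : x - y ∈ ball x ε := by simpa
  have hderiv {y : E} (hy : y ∈ ball x ε) : HasFDerivAt v (v' y) y :=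
    (hd y hy).hasFDerivWithinAt.hasFDerivAt (isOpen_ball.mem_nhds hy)
  have hsecond := (convex_closedBall (0 : E) ‖h‖).norm_image_sub_le_of_norm_hasFDerivWithin_le
    (f := fun y => v (x + y) + v (x - y)) (f' := fun y => v' (x + y) - v' (x - y))
    (C := 2 * K * ‖h‖) (x := 0) (y := h) ?_ ?_ (by simp) (by simp)
  · rw [sub_zero, add_zero, sub_zero, norm_eq_abs] at hsecond
    nlinarith [neg_le_of_abs_le hsecond]
  · intro y hy
    have hy' : ‖y‖ < ε := (mem_closedBall_zero_iff.1 hy).trans_lt hh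
    have hadd : HasFDerivAt (fun y => v (x + y)) (v' (x + y)) y :=
      hasFDerivAt_comp_add_left x |>.2 (hderiv (add_mem hy'))
    have hsub : HasFDerivAt (fun y => v (x - y)) (-v' (x - y)) y := by
      simpa [Function.comp_def] using (hderiv (sub_mem hy')).comp y ((hasFDerivAt_id y).const_sub x)
    rw [sub_eq_add_neg]
    exact (hadd.add hsub).hasFDerivWithinAt
  · intro y hy
    rw [mem_closedBall_zero_iff] at hy
    calc ‖v' (x + y) - v' (x - y)‖ ≤ K * ‖x + y - (x - y)‖ :=
          hK.norm_sub_le (add_mem (hy.trans_lt hh)) (sub_mem (hy.trans_lt hh))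
      _ = K * ‖(2 : ℝ) • y‖ := by rw [two_smul]; abel_nf
      _ ≤ 2 * K * ‖h‖ := by
        rw [norm_smul, norm_ofNat]
        nlinarith [mul_le_mul_of_nonneg_left hy K.coe_nonneg]

lemma setIntegral_mul_le_of_add_neg_le {E : Type*} [InvolutiveNeg E] [MeasurableSpace E]
    [MeasurableNeg E] {μ : Measure E} [μ.IsNegInvariant] {S : Set E}
    (hS : MeasurableSet S) (hneg : -S = S) {f k φ : E → ℝ} (hk : ∀ h ∈ S, 0 ≤ k h)
    (hk_neg : ∀ h, k (-h) = k h) (hf : IntegrableOn (fun h => f h * k h) S μ)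
    (hφ : IntegrableOn (fun h => φ h * k h) S μ) (hle : ∀ h ∈ S, f h + f (-h) ≤ 2 * φ h) :
    ∫ h in S, f h * k h ∂μ ≤ ∫ h in S, φ h * k h ∂μ := by
  have hmp : MeasurePreserving (Neg.neg : E → E) (μ.restrict S) (μ.restrict S) := by
    have := (Measure.measurePreserving_neg μ).restrict_preimage hS
    rwa [Set.neg_preimage, hneg] at this
  have hemb : MeasurableEmbedding (Neg.neg : E → E) := (MeasurableEquiv.neg E).measurableEmbedding
  have hf_neg : Integrable (fun h => f (-h) * k h) (μ.restrict S) := by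
    simpa only [Function.comp_def, hk_neg] using (hmp.integrable_comp_emb hemb).2 hf
  have integral_neg : ∫ h in S, f (-h) * k h ∂μ = ∫ h in S, f h * k h ∂μ := by
    simpa only [hk_neg] using hmp.integral_comp hemb fun h => f h * k h
  have hsum : ∫ h in S, (f h * k h + f (-h) * k h) ∂μ ≤ ∫ h in S, 2 * (φ h * k h) ∂μ := by
    refine setIntegral_mono_on (hf.add hf_neg) (hφ.const_mul 2) hS fun h hh => ?_
    rw [← add_mul, ← mul_assoc]
    exact mul_le_mul_of_nonneg_right (hle h hh) (hk h hh)
  rw [integral_add hf hf_neg, integral_neg, integral_const_mul] at hsum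
  linarith

lemma mul_sq_sub_sq_rpow_neg_le {s ρ δ t : ℝ} (hs : s ∈ Ioo (0 : ℝ) 1) (hρ : 0 < ρ)
    (ht : t ∈ Ioo ρ δ) :
    t * (t ^ 2 - ρ ^ 2) ^ (-s) ≤ δ ^ (1 - s) * (t - ρ) ^ (-s) := by
  have htρ : 0 < t - ρ := sub_pos.2 ht.1
  have ht0 : 0 < t := hρ.trans ht.1
  calc t * (t ^ 2 - ρ ^ 2) ^ (-s) ≤ t * (t * (t - ρ)) ^ (-s) := by
        gcongr 1
        exact rpow_le_rpow_of_nonpos (by positivity) (by nlinarith) (by linarith [hs.1])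
    _ = t ^ (1 - s) * (t - ρ) ^ (-s) := by
        rw [mul_rpow ht0.le htρ.le, ← mul_assoc, sub_eq_add_neg 1 s, rpow_add ht0,
          rpow_one]
    _ ≤ δ ^ (1 - s) * (t - ρ) ^ (-s) := by
        gcongr
        exacts [by linarith [hs.2], ht.2.le]

lemma lintegral_Ioo_mul_sq_sub_sq_rpow_neg_le {s ρ δ : ℝ} (hs : s ∈ Ioo (0 : ℝ) 1) (hρ : 0 < ρ)
    (hδ : ρ < δ) :
    ∫⁻ t in Ioo ρ δ, ENNReal.ofReal (t * (t ^ 2 - ρ ^ 2) ^ (-s)) ≤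
      ENNReal.ofReal (δ ^ (2 - 2 * s) / (1 - s)) := by
  have hδ0 : 0 < δ := hρ.trans hδ
  have hs' : 0 < 1 - s := sub_pos.2 hs.2
  calc _ ≤ ∫⁻ t in Ioo ρ δ, ENNReal.ofReal (δ ^ (1 - s)) * ENNReal.ofReal ((t - ρ) ^ (-s)) := by
        refine setLIntegral_mono' measurableSet_Ioo fun t ht => ?_
        rw [← ENNReal.ofReal_mul (by positivity)]
        exact ENNReal.ofReal_le_ofReal (mul_sq_sub_sq_rpow_neg_le hs hρ ht)
    _ = ENNReal.ofReal (δ ^ (1 - s)) * ∫⁻ t in Ioo 0 (δ - ρ), ENNReal.ofReal (t ^ (1 - s - 1)) := by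
        rw [lintegral_const_mul _ (by fun_prop),
          ← (measurePreserving_sub_right volume ρ).setLIntegral_comp_preimage_emb
            (measurableEmbedding_subRight ρ) _ (Ioo 0 (δ - ρ))]
        simp
    _ = ENNReal.ofReal (δ ^ (1 - s) * ((δ - ρ) ^ (1 - s) / (1 - s))) := by
        rw [lintegral_Ioo_rpow_sub_one hs' le_rfl (by linarith), zero_rpow hs'.ne', sub_zero,
          ← ENNReal.ofReal_mul (by positivity)]
    _ ≤ ENNReal.ofReal (δ ^ (1 - s) * (δ ^ (1 - s) / (1 - s))) := by
        gcongr
        linarith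
    _ = _ := by
        rw [← mul_div_assoc, ← rpow_add hδ0]
        ring_nf

section

variable {E : Type*} [NormedAddCommGroup E] [InnerProductSpace ℝ E]
  [FiniteDimensional ℝ E] [MeasurableSpace E] [BorelSpace E]

lemma lintegral_sq_norm_mul_shiftedRieszKernel_le [Nontrivial E] {s ρ δ : ℝ}
    (hs : s ∈ Ioo (0 : ℝ) 1) (hρ : 0 < ρ) (hδ : ρ < δ) :
    ∫⁻ h in ball (0 : E) δ \ closedBall 0 ρ,
        ENNReal.ofReal (‖h‖ ^ 2 * shiftedRieszKernel s ρ h) ≤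
      ENNReal.ofReal (unitSphereArea E * (δ ^ (2 - 2 * s) / (1 - s))) := by
  have hS : MeasurableSet (ball (0 : E) δ \ closedBall 0 ρ) :=
    measurableSet_ball.diff measurableSet_closedBall
  have ray (θ : sphere (0 : E) 1) : (∫⁻ t in Ioi (0 : ℝ), ENNReal.ofReal (t ^ (finrank ℝ E - 1)) *
      (ball (0 : E) δ \ closedBall 0 ρ).indicator
        (fun h => ENNReal.ofReal (‖h‖ ^ 2 * shiftedRieszKernel s ρ h)) (t • (θ : E))) =
      ∫⁻ t in Ioo ρ δ, ENNReal.ofReal (t * (t ^ 2 - ρ ^ 2) ^ (-s)) := by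
    rw [← inter_eq_left.2 (Ioo_subset_Ioi_self.trans (Ioi_subset_Ioi hρ.le) : Ioo ρ δ ⊆ Ioi 0),
      ← Measure.restrict_restrict measurableSet_Ioo, ← lintegral_indicator measurableSet_Ioo]
    refine setLIntegral_congr_fun measurableSet_Ioi fun t ht => ?_
    have ht : 0 < t := ht
    have hnorm : ‖t • (θ : E)‖ = t := by
      rw [norm_smul, norm_eq_of_mem_sphere θ, mul_one, norm_of_nonneg ht.le]
    have hmem : t • (θ : E) ∈ ball (0 : E) δ \ closedBall 0 ρ ↔ t ∈ Ioo ρ δ := by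
      simp [hnorm, and_comm]
    by_cases h : t ∈ Ioo ρ δ
    · rw [indicator_of_mem (hmem.2 h), indicator_of_mem h, ← ENNReal.ofReal_mul (by positivity),
        shiftedRieszKernel, hnorm, ← pow_sub_one_mul finrank_pos.ne' t]
      field_simp
    · rw [indicator_of_notMem (hmem.not.2 h), indicator_of_notMem h, mul_zero]
  rw [← lintegral_indicator hS, lintegral_eq_lintegral_sphere_rays (by fun_prop)]
  simp only [ray, lintegral_const]
  rw [unitSphereArea, ENNReal.ofReal_mul (by positivity), ofReal_measureReal, mul_comm]
  gcongr
  exact lintegral_Ioo_mul_sq_sub_sq_rpow_neg_le hs hρ hδ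

lemma setIntegral_mul_shiftedRieszKernel_le [Nontrivial E] {s ρ δ K : ℝ} (hs : s ∈ Ioo (0 : ℝ) 1)
    (hρ : 0 < ρ) (hδ : ρ < δ) (hK : 0 ≤ K) {f : E → ℝ}
    (hf : IntegrableOn (fun h => f h * shiftedRieszKernel s ρ h) (closedBall 0 ρ)ᶜ)
    (hle : ∀ h, ‖h‖ < δ → f h + f (-h) ≤ 2 * (K * ‖h‖ ^ 2)) :
    ∫ h in ball 0 δ \ closedBall 0 ρ, f h * shiftedRieszKernel s ρ h ≤
      K * (unitSphereArea E * (δ ^ (2 - 2 * s) / (1 - s))) := by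
  set S := ball (0 : E) δ \ closedBall 0 ρ
  have hS : MeasurableSet S := measurableSet_ball.diff measurableSet_closedBall
  have hk (h : E) (hh : h ∈ S) : 0 ≤ shiftedRieszKernel s ρ h :=
    (shiftedRieszKernel_pos s hρ.le (by simpa using hh.2)).le
  have hk_sq : 0 ≤ᵐ[volume.restrict S] fun h => ‖h‖ ^ 2 * shiftedRieszKernel s ρ h :=
    (ae_restrict_iff' hS).2 (.of_forall fun h hh => mul_nonneg (sq_nonneg _) (hk h hh))
  have hbound := lintegral_sq_norm_mul_shiftedRieszKernel_le (E := E) hs hρ hδ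
  have hint : IntegrableOn (fun h => ‖h‖ ^ 2 * shiftedRieszKernel s ρ h) S :=
    (lintegral_ofReal_ne_top_iff_integrable (by fun_prop) hk_sq).1
      (hbound.trans_lt ENNReal.ofReal_lt_top).ne
  have harea : 0 ≤ unitSphereArea E := measureReal_nonneg
  have hs' : 0 < 1 - s := sub_pos.2 hs.2
  have hδ0 : 0 < δ := hρ.trans hδ
  calc ∫ h in S, f h * shiftedRieszKernel s ρ h
      ≤ ∫ h in S, K * ‖h‖ ^ 2 * shiftedRieszKernel s ρ h := by
        refine setIntegral_mul_le_of_add_neg_le hS (by ext; simp [S]) hk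
          (shiftedRieszKernel_neg s ρ) (hf.mono_set (sdiff_subset_compl _ _)) ?_
          fun h hh => hle h (mem_ball_zero_iff.1 hh.1)
        simpa only [IntegrableOn, mul_assoc] using hint.const_mul K
    _ = K * ∫ h in S, ‖h‖ ^ 2 * shiftedRieszKernel s ρ h := by
        simp only [mul_assoc, integral_const_mul]
    _ ≤ _ := by
        gcongr
        rw [integral_eq_lintegral_of_nonneg_ae hk_sq (by fun_prop)]
        exact ENNReal.toReal_le_of_le_ofReal (by positivity) hbound

end

section

variable {E : Type*} [NormedAddCommGroup E] [InnerProductSpace ℝ E]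
  [FiniteDimensional ℝ E] [MeasurableSpace E] [BorelSpace E]

lemma tendsto_setIntegral_mul_shiftedRieszKernel {s δ : ℝ} (hs : 0 ≤ s) (hδ : 0 < δ)
    {f : E → ℝ} (hf : Measurable f)
    (hfar : IntegrableOn (fun h => f h * shiftedRieszKernel s 0 h) (ball 0 δ)ᶜ) :
    Tendsto (fun ρ => ∫ h in (ball 0 δ)ᶜ, f h * shiftedRieszKernel s ρ h)
      (nhdsWithin 0 (Ioi 0))
      (nhds (∫ h in (ball 0 δ)ᶜ, f h * shiftedRieszKernel s 0 h)) := by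
  have outside {p : E → Prop} (hp : ∀ h, δ ≤ ‖h‖ → p h) :
      ∀ᵐ h ∂(volume.restrict (ball (0 : E) δ)ᶜ), p h :=
    (ae_restrict_iff' measurableSet_ball.compl).2 (.of_forall fun h hh => hp h (by simpa using hh))
  refine tendsto_integral_filter_of_dominated_convergence
    (fun h => 2 ^ s * ‖f h * shiftedRieszKernel s 0 h‖) (.of_forall fun ρ => by fun_prop) ?_
    (hfar.norm.const_mul _) (outside fun h hh => ?_)
  · filter_upwards [Ioo_mem_nhdsGT (half_pos hδ)] with ρ hρ
    refine outside fun h hh => ?_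
    have hle := shiftedRieszKernel_le_two_rpow_mul hs hρ.1 (h := h) (by linarith [hρ.2])
    rw [norm_mul, norm_mul, mul_left_comm,
      norm_of_nonneg (shiftedRieszKernel_pos s hρ.1.le (by linarith [hρ.2])).le,
      norm_of_nonneg (shiftedRieszKernel_pos s le_rfl (hδ.trans_le hh)).le]
    gcongr
  · have hh0 : h ≠ 0 := norm_pos_iff.1 (hδ.trans_le hh)
    exact ((tendsto_shiftedRieszKernel s hh0).mono_left nhdsWithin_le_nhds).const_mul (f h)

lemma le_add_setIntegral_mul_shiftedRieszKernel_zero [Nontrivial E] {s δ K η : ℝ}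
    (hs : s ∈ Ioo (0 : ℝ) 1) (hδ : 0 < δ) (hK : 0 ≤ K) {f : E → ℝ} (hf : Continuous f)
    (hle : ∀ h, ‖h‖ < δ → f h + f (-h) ≤ 2 * (K * ‖h‖ ^ 2))
    (hfar : ∀ δ > 0, IntegrableOn (fun h => f h * shiftedRieszKernel s 0 h) (ball 0 δ)ᶜ)
    (hη : ∀ᶠ ρ in nhdsWithin 0 (Ioi 0),
      η ≤ ∫ h in (closedBall 0 ρ)ᶜ, f h * shiftedRieszKernel s ρ h) :
    η ≤ K * (unitSphereArea E * (δ ^ (2 - 2 * s) / (1 - s))) +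
      ∫ h in (ball 0 δ)ᶜ, f h * shiftedRieszKernel s 0 h := by
  refine ge_of_tendsto ((tendsto_setIntegral_mul_shiftedRieszKernel hs.1.le hδ hf.measurable
    (hfar δ hδ)).const_add _) ?_
  filter_upwards [hη, Ioo_mem_nhdsGT hδ] with ρ hηρ hρ
  have hint := integrableOn_mul_shiftedRieszKernel hs hρ.1 hf (hfar (2 * ρ) (by linarith [hρ.1]))
  have hsub : (ball (0 : E) δ)ᶜ ⊆ (closedBall 0 ρ)ᶜ :=
    compl_subset_compl.2 (closedBall_subset_ball hρ.2)
  have near_eq : (closedBall (0 : E) ρ)ᶜ ∩ ball 0 δ = ball 0 δ \ closedBall 0 ρ := by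
    rw [inter_comm, sdiff_eq]
  have far_eq : (closedBall (0 : E) ρ)ᶜ \ ball 0 δ = (ball 0 δ)ᶜ := by
    rw [sdiff_eq, inter_eq_right.2 hsub]
  rw [← integral_inter_add_sdiff measurableSet_ball hint, near_eq, far_eq] at hηρ
  exact hηρ.trans (by gcongr; exact setIntegral_mul_shiftedRieszKernel_le hs hρ.1 hρ.2 hK hint hle)

lemma le_of_tendsto_setIntegral_mul_shiftedRieszKernel_zero [Nontrivial E] {s ε K η L : ℝ}
    (hs : s ∈ Ioo (0 : ℝ) 1) (hε : 0 < ε) (hK : 0 ≤ K) {f : E → ℝ} (hf : Continuous f)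
    (hle : ∀ h, ‖h‖ < ε → f h + f (-h) ≤ 2 * (K * ‖h‖ ^ 2))
    (hfar : ∀ δ > 0, IntegrableOn (fun h => f h * shiftedRieszKernel s 0 h) (ball 0 δ)ᶜ)
    (hη : ∀ᶠ ρ in nhdsWithin 0 (Ioi 0),
      η ≤ ∫ h in (closedBall 0 ρ)ᶜ, f h * shiftedRieszKernel s ρ h)
    (hL : Tendsto (fun δ => ∫ h in (ball 0 δ)ᶜ, f h * shiftedRieszKernel s 0 h)
      (nhdsWithin 0 (Ioi 0)) (nhds L)) : η ≤ L := by
  have hs' : 0 < 2 - 2 * s := by linarith [hs.2]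
  have hpow : Tendsto (fun δ : ℝ => δ ^ (2 - 2 * s)) (nhdsWithin 0 (Ioi 0)) (nhds 0) := by
    simpa [zero_rpow hs'.ne'] using
      (continuousAt_rpow_const 0 (2 - 2 * s) (.inr hs'.le)).tendsto.mono_left nhdsWithin_le_nhds
  have hlim := (((hpow.div_const (1 - s)).const_mul (unitSphereArea E)).const_mul K).add hL
  rw [zero_div, mul_zero, mul_zero, zero_add] at hlim
  refine ge_of_tendsto hlim ?_
  filter_upwards [Ioo_mem_nhdsGT hε] with δ hδ
  exact le_add_setIntegral_mul_shiftedRieszKernel_zero hs hδ.1 hK hf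
    (fun h hh => hle h (hh.trans hδ.2)) hfar hη

end

/-! ### Comparison with the Poisson extension -/

section

variable {E : Type*} [NormedAddCommGroup E] [InnerProductSpace ℝ E]
  [FiniteDimensional ℝ E] [Nontrivial E] [MeasurableSpace E] [BorelSpace E]

lemma setLIntegral_exteriorPoissonKernel_zero_sub {s ρ : ℝ} (hs : s ∈ Ioo (0 : ℝ) 1) (hρ : 0 ≤ ρ)
    {x : E} {S : Set E} (hS : MeasurableSet S) (hsub : S ⊆ (closedBall x ρ)ᶜ) {f : E → ℝ}
    (hf : ∀ z, 0 ≤ f z)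
    (hint : IntegrableOn (fun h => f (x + h) * shiftedRieszKernel s ρ h) ((x + ·) ⁻¹' S)) :
    ∫⁻ z in S, ENNReal.ofReal (exteriorPoissonKernel s ρ 0 (z - x)) * ENNReal.ofReal (f z) =
      ENNReal.ofReal (Bns (finrank ℝ E) s * ρ ^ (2 * s) *
        ∫ h in (x + ·) ⁻¹' S, f (x + h) * shiftedRieszKernel s ρ h) := by
  have hB := Bns_pos (finrank_pos (R := ℝ) (M := E)) hs
  have hS' : MeasurableSet ((x + ·) ⁻¹' S) := measurable_const_add x hS
  have outside {h : E} (hh : x + h ∈ S) : ρ < ‖h‖ := by simpa using hsub hh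
  have kernel_eq (h : E) (hh : x + h ∈ S) :
      ENNReal.ofReal (exteriorPoissonKernel s ρ 0 (x + h - x)) * ENNReal.ofReal (f (x + h)) =
        ENNReal.ofReal (Bns (finrank ℝ E) s * ρ ^ (2 * s) *
          (f (x + h) * shiftedRieszKernel s ρ h)) := by
    rw [add_sub_cancel_left, exteriorPoissonKernel_zero_left s hρ (outside hh),
      ← ENNReal.ofReal_mul' (hf _), mul_assoc, mul_comm (f _)]
  rw [← integral_const_mul, ofReal_integral_eq_lintegral_ofReal (hint.const_mul _),
    ← (measurePreserving_add_left volume x).setLIntegral_comp_preimage_emb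
      (measurableEmbedding_addLeft x), setLIntegral_congr_fun hS' kernel_eq]
  refine (ae_restrict_iff' hS').2 (.of_forall fun h hh => ?_)
  have := shiftedRieszKernel_pos s hρ (outside hh)
  have := hf (x + h)
  simp only [Pi.zero_apply]
  positivity

lemma setIntegral_shiftedRieszKernel {s ρ : ℝ} (hs : s ∈ Ioo (0 : ℝ) 1) (hρ : 0 < ρ) :
    Bns (finrank ℝ E) s * ρ ^ (2 * s) *
      ∫ h in (closedBall (0 : E) ρ)ᶜ, shiftedRieszKernel s ρ h = 1 := by
  have h := setLIntegral_exteriorPoissonKernel_zero_sub hs hρ.le (x := (0 : E)) (f := fun _ => 1)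
    measurableSet_closedBall.compl subset_rfl (fun _ => zero_le_one)
    (by simpa using integrableOn_shiftedRieszKernel hs hρ)
  simp only [ENNReal.ofReal_one, mul_one, lintegral_exteriorPoissonKernel_zero_sub hs hρ, zero_add,
    preimage_id', one_mul] at h
  exact (ENNReal.ofReal_eq_one.1 h.symm)

lemma mul_setIntegral_shiftedRieszKernel_add_le {s r ρ D : ℝ} (hs : s ∈ Ioo (0 : ℝ) 1)
    (hρ : 0 < ρ) {v : E → ℝ} (hv : Measurable v) (hv0 : ∀ z, 0 ≤ v z) {x : E} (hx : ‖x‖ + ρ < r)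
    (hint : IntegrableOn (fun h => v (x + h) * shiftedRieszKernel s ρ h) (closedBall 0 ρ)ᶜ)
    (hD : 0 ≤ D)
    (hle : ∀ z ∈ closedBall 0 r, ENNReal.ofReal (v z) ≤
      poissonExtension s r (fun y => ENNReal.ofReal (v y)) z + ENNReal.ofReal D)
    (heq : poissonExtension s r (fun y => ENNReal.ofReal (v y)) x + ENNReal.ofReal D =
      ENNReal.ofReal (v x)) :
    Bns (finrank ℝ E) s * ρ ^ (2 * s) *
        ((∫ h in (closedBall 0 ρ)ᶜ, v (x + h) * shiftedRieszKernel s ρ h) +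
          D * ∫ h in (closedBall (-x) r)ᶜ, shiftedRieszKernel s ρ h) ≤ v x := by
  have := Bns_pos (finrank_pos (R := ℝ) (M := E)) hs
  have hball (c : E) (t : ℝ) : (x + ·) ⁻¹' (closedBall c t)ᶜ = (closedBall (c - x) t)ᶜ := by
    rw [preimage_compl, preimage_add_closedBall]
  have hsub : (closedBall (0 : E) r)ᶜ ⊆ (closedBall x ρ)ᶜ :=
    compl_subset_compl.2 (closedBall_subset_closedBall' (by rw [dist_zero_right]; linarith))
  have hsub' : (closedBall (-x) r)ᶜ ⊆ (closedBall 0 ρ)ᶜ := by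
    simpa [hball] using preimage_mono (f := (x + ·)) hsub
  have around_x := setLIntegral_exteriorPoissonKernel_zero_sub hs hρ.le (x := x) (f := v)
    measurableSet_closedBall.compl subset_rfl hv0
  have outside := setLIntegral_exteriorPoissonKernel_zero_sub hs hρ.le (f := fun _ => 1)
    measurableSet_closedBall.compl hsub (fun _ => zero_le_one)
  simp only [hball, sub_self, zero_sub, ENNReal.ofReal_one, mul_one, one_mul] at around_x outside
  have key := lintegral_exteriorPoissonKernel_mul_add_le hs hv.ennreal_ofReal hρ hx hle
  rw [around_x hint, outside ((integrableOn_shiftedRieszKernel hs hρ).mono_set hsub'), heq,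
    ← ENNReal.ofReal_mul hD, mul_left_comm D] at key
  rw [mul_add]
  exact (ENNReal.ofReal_le_ofReal_iff (hv0 x)).1 (ENNReal.ofReal_add_le.trans key)

lemma mul_setIntegral_shiftedRieszKernel_le {s r ρ D : ℝ} (hs : s ∈ Ioo (0 : ℝ) 1) (hρ : 0 < ρ)
    {v : E → ℝ} (hv : Measurable v) (hv0 : ∀ z, 0 ≤ v z) {x : E} (hx : ‖x‖ + ρ < r)
    (hint : IntegrableOn (fun h => v (x + h) * shiftedRieszKernel s ρ h) (closedBall 0 ρ)ᶜ)
    (hD : 0 ≤ D)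
    (hle : ∀ z ∈ closedBall 0 r, ENNReal.ofReal (v z) ≤
      poissonExtension s r (fun y => ENNReal.ofReal (v y)) z + ENNReal.ofReal D)
    (heq : poissonExtension s r (fun y => ENNReal.ofReal (v y)) x + ENNReal.ofReal D =
      ENNReal.ofReal (v x)) :
    D * ∫ h in (closedBall (-x) r)ᶜ, shiftedRieszKernel s ρ h ≤
      ∫ h in (closedBall 0 ρ)ᶜ, (v x - v (x + h)) * shiftedRieszKernel s ρ h := by
  have hB := Bns_pos (finrank_pos (R := ℝ) (M := E)) hs
  have hc : 0 < Bns (finrank ℝ E) s * ρ ^ (2 * s) := by positivity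
  have mass := setIntegral_shiftedRieszKernel (E := E) hs hρ
  have key := mul_setIntegral_shiftedRieszKernel_add_le hs hρ hv hv0 hx hint hD hle heq
  simp only [sub_mul]
  rw [integral_sub ((integrableOn_shiftedRieszKernel hs hρ).const_mul _) hint, integral_const_mul,
    le_sub_iff_add_le', ← mul_le_mul_iff_right₀ hc, mul_left_comm _ (v x), mass, mul_one]
  exact key

lemma setIntegral_shiftedRieszKernel_zero_pos {s r : ℝ} (hs : s ∈ Ioo (0 : ℝ) 1) {x : E}
    (hx : ‖x‖ < r) : 0 < ∫ h in (closedBall (-x) r)ᶜ, shiftedRieszKernel s 0 h := by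
  have hsub : (closedBall (-x) r)ᶜ ⊆ (ball 0 (r - ‖x‖))ᶜ :=
    compl_subset_compl.2 (ball_subset_closedBall.trans
      (closedBall_subset_closedBall' (by simp)))
  have hpos (h : E) (hh : h ∈ (closedBall (-x) r)ᶜ) : 0 < shiftedRieszKernel s 0 h := by
    have : r - ‖x‖ ≤ ‖h‖ := by simpa using hsub hh
    exact shiftedRieszKernel_pos s le_rfl (by linarith)
  have hmeas : MeasurableSet (closedBall (-x) r)ᶜ := measurableSet_closedBall.compl
  rw [setIntegral_pos_iff_support_of_nonneg_ae
    ((ae_restrict_iff' hmeas).2 (.of_forall fun h hh => (hpos h hh).le))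
    ((integrableOn_shiftedRieszKernel_zero hs (sub_pos.2 hx)).mono_set hsub),
    inter_eq_right.2 fun h hh => Function.mem_support.2 (hpos h hh).ne']
  refine isClosed_closedBall.isOpen_compl.measure_pos volume ?_
  rw [nonempty_compl]
  exact fun h => NormedSpace.unbounded_univ ℝ E (h ▸ isBounded_closedBall)

lemma setIntegral_shiftedRieszKernel_zero_le {s r ρ : ℝ} (hs : s ∈ Ioo (0 : ℝ) 1) (hρ : 0 < ρ)
    {x : E} (hx : ‖x‖ + ρ < r) :
    ∫ h in (closedBall (-x) r)ᶜ, shiftedRieszKernel s 0 h ≤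
      ∫ h in (closedBall (-x) r)ᶜ, shiftedRieszKernel s ρ h := by
  have hsub : (closedBall (-x) r)ᶜ ⊆ (closedBall 0 ρ)ᶜ :=
    compl_subset_compl.2 (closedBall_subset_closedBall' (by simpa using by linarith))
  have hsub' : (closedBall (-x) r)ᶜ ⊆ (ball 0 ρ)ᶜ :=
    hsub.trans (compl_subset_compl.2 ball_subset_closedBall)
  refine setIntegral_mono_on ((integrableOn_shiftedRieszKernel_zero hs hρ).mono_set hsub')
    ((integrableOn_shiftedRieszKernel hs hρ).mono_set hsub) measurableSet_closedBall.compl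
    fun h hh => shiftedRieszKernel_zero_le hs.1.le hρ.le (by simpa using hsub hh)

lemma exists_pos_le_setIntegral_of_poissonExtension_lt {s r : ℝ} (hs : s ∈ Ioo (0 : ℝ) 1)
    {v : E → ℝ} (hv : Continuous v) (hv0 : ∀ z, 0 ≤ v z)
    (hfar : ∀ x, ∀ δ > 0, IntegrableOn (fun h => v (x + h) * shiftedRieszKernel s 0 h) (ball 0 δ)ᶜ)
    {x : E} (hx : ‖x‖ < r)
    (hlt : poissonExtension s r (fun y => ENNReal.ofReal (v y)) x < ENNReal.ofReal (v x)) :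
    ∃ x₀, 0 < v x₀ ∧ ∃ η > 0, ∀ᶠ ρ in nhdsWithin 0 (Ioi 0),
      η ≤ ∫ h in (closedBall 0 ρ)ᶜ, (v x₀ - v (x₀ + h)) * shiftedRieszKernel s ρ h := by
  set u : E → ENNReal := fun y => ENNReal.ofReal (v y)
  have hu : Continuous u := ENNReal.continuous_ofReal.comp hv
  obtain ⟨x₀, -, hlt₀, hle⟩ := exists_forall_le_add_tsub (isCompact_closedBall (0 : E) r)
    (lowerSemicontinuousOn_poissonExtension hs hu.lowerSemicontinuous) hu.continuousOn
    (fun z _ => ENNReal.ofReal_ne_top) (mem_closedBall_zero_iff.2 hx.le) hlt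
  have hx₀ : ‖x₀‖ < r := by
    by_contra h
    simp [poissonExtension, h] at hlt₀
  set d := u x₀ - poissonExtension s r u x₀ with hd
  have hd_top : d ≠ ⊤ := ENNReal.sub_ne_top ENNReal.ofReal_ne_top
  have hd_pos : 0 < d.toReal := ENNReal.toReal_pos (tsub_pos_of_lt hlt₀).ne' hd_top
  have heq : poissonExtension s r u x₀ + d = u x₀ := add_tsub_cancel_of_le hlt₀.le
  rw [← ENNReal.ofReal_toReal hd_top] at hle heq
  refine ⟨x₀, ENNReal.ofReal_pos.1 (pos_of_gt hlt₀),
    d.toReal * ∫ h in (closedBall (-x₀) r)ᶜ, shiftedRieszKernel s 0 h,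
    mul_pos hd_pos (setIntegral_shiftedRieszKernel_zero_pos hs hx₀), ?_⟩
  filter_upwards [Ioo_mem_nhdsGT (sub_pos.2 hx₀)] with ρ ⟨hρ, hρr⟩
  have hint := integrableOn_mul_shiftedRieszKernel hs hρ (f := fun h => v (x₀ + h)) (by fun_prop)
    (hfar x₀ (2 * ρ) (by positivity))
  refine le_trans ?_ (mul_setIntegral_shiftedRieszKernel_le hs hρ hv.measurable hv0
    (by linarith) hint hd_pos.le hle heq)
  exact mul_le_mul_of_nonneg_left
    (setIntegral_shiftedRieszKernel_zero_le hs hρ (by linarith)) hd_pos.le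

lemma ofReal_le_poissonExtension {s r : ℝ} (hs : s ∈ Ioo (0 : ℝ) 1) {v : E → ℝ}
    (hv : Continuous v) (hv0 : ∀ z, 0 ≤ v z)
    (hfar : ∀ x, ∀ δ > 0, IntegrableOn (fun h => v (x + h) * shiftedRieszKernel s 0 h) (ball 0 δ)ᶜ)
    (hsecond : ∀ x, 0 < v x → ∃ ε > 0, ∃ K ≥ 0, ∀ h, ‖h‖ < ε →
      v x - v (x + h) + (v x - v (x - h)) ≤ 2 * (K * ‖h‖ ^ 2))
    (hsub : ∀ x, 0 < v x → ∃ L ≤ 0, Tendsto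
      (fun δ => ∫ h in (ball 0 δ)ᶜ, (v x - v (x + h)) * shiftedRieszKernel s 0 h)
      (nhdsWithin 0 (Ioi 0)) (nhds L)) {x : E} (hx : ‖x‖ < r) :
    ENNReal.ofReal (v x) ≤ poissonExtension s r (fun y => ENNReal.ofReal (v y)) x := by
  by_contra! hlt
  obtain ⟨x₀, hx₀, η, hη, hle⟩ :=
    exists_pos_le_setIntegral_of_poissonExtension_lt hs hv hv0 hfar hx hlt
  obtain ⟨ε, hε, K, hK, hquad⟩ := hsecond x₀ hx₀
  obtain ⟨L, hL0, hL⟩ := hsub x₀ hx₀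
  have hfar₀ (δ : ℝ) (hδ : δ > 0) : IntegrableOn
      (fun h => (v x₀ - v (x₀ + h)) * shiftedRieszKernel s 0 h) (ball 0 δ)ᶜ := by
    simp only [sub_mul]
    exact ((integrableOn_shiftedRieszKernel_zero hs hδ).const_mul _).sub (hfar x₀ δ hδ)
  have hηL := le_of_tendsto_setIntegral_mul_shiftedRieszKernel_zero hs hε hK (by fun_prop)
    (fun h hh => by simpa [sub_eq_add_neg] using hquad h hh) hfar₀ hle hL
  linarith

end

section

variable {E : Type*} [NormedAddCommGroup E] [InnerProductSpace ℝ E]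
  [FiniteDimensional ℝ E] [Nontrivial E] [MeasurableSpace E] [BorelSpace E]

lemma integrableOn_exteriorPoissonKernel_mul {s r : ℝ} (hs : s ∈ Ioo (0 : ℝ) 1) {v : E → ℝ}
    (hv : Continuous v)
    (hfar : IntegrableOn (fun h => v h * shiftedRieszKernel s 0 h) (ball 0 (2 * r))ᶜ)
    {x : E} (hx : ‖x‖ < r) :
    IntegrableOn (fun y => exteriorPoissonKernel s r x y * v y) (closedBall 0 r)ᶜ := by
  have hr : 0 < r := (norm_nonneg x).trans_lt hx
  have := hv.measurable
  have hint := (integrableOn_mul_shiftedRieszKernel hs hr hv hfar).norm.const_mul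
    ((r / (r - ‖x‖)) ^ finrank ℝ E * ((r ^ 2 - ‖x‖ ^ 2) / r ^ 2) ^ s *
      (Bns (finrank ℝ E) s * r ^ (2 * s)))
  refine hint.mono' (by fun_prop) ?_
  refine (ae_restrict_iff' measurableSet_closedBall.compl).2 (.of_forall fun y hy => ?_)
  have hry : r < ‖y‖ := by simpa using hy
  have hA : ‖y‖ ≤ r / (r - ‖x‖) * ‖x - y‖ := by
    rw [div_mul_eq_mul_div, le_div_iff₀ (sub_pos.2 hx)]
    nlinarith [norm_sub_norm_le y x, norm_sub_rev x y, norm_nonneg x]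
  have hle := exteriorPoissonKernel_le_of_norm_le_mul hs hx hry hA
  rw [exteriorPoissonKernel_zero_left s hr.le hry] at hle
  rw [norm_mul, norm_of_nonneg (exteriorPoissonKernel_pos hs hx hry).le, norm_mul,
    norm_of_nonneg (shiftedRieszKernel_pos s hr.le hry).le]
  exact (mul_le_mul_of_nonneg_right hle (norm_nonneg (v y))).trans_eq (by ring)

lemma le_setIntegral_exteriorPoissonKernel_mul {s r : ℝ} (hs : s ∈ Ioo (0 : ℝ) 1) {v : E → ℝ}
    (hv : Continuous v) (hv0 : ∀ z, 0 ≤ v z)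
    (hfar : ∀ x, ∀ δ > 0, IntegrableOn (fun h => v (x + h) * shiftedRieszKernel s 0 h) (ball 0 δ)ᶜ)
    (hsecond : ∀ x, 0 < v x → ∃ ε > 0, ∃ K ≥ 0, ∀ h, ‖h‖ < ε →
      v x - v (x + h) + (v x - v (x - h)) ≤ 2 * (K * ‖h‖ ^ 2))
    (hsub : ∀ x, 0 < v x → ∃ L ≤ 0, Tendsto
      (fun δ => ∫ h in (ball 0 δ)ᶜ, (v x - v (x + h)) * shiftedRieszKernel s 0 h)
      (nhdsWithin 0 (Ioi 0)) (nhds L)) {x : E} (hx : ‖x‖ < r) :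
    v x ≤ ∫ y in (closedBall 0 r)ᶜ, exteriorPoissonKernel s r x y * v y := by
  have hr : 0 < r := (norm_nonneg x).trans_lt hx
  have hpos (y : E) (hy : y ∈ (closedBall 0 r)ᶜ) : 0 ≤ exteriorPoissonKernel s r x y :=
    (exteriorPoissonKernel_pos hs hx (by simpa using hy)).le
  have hnonneg : 0 ≤ᵐ[volume.restrict (closedBall 0 r)ᶜ]
      fun y => exteriorPoissonKernel s r x y * v y :=
    (ae_restrict_iff' measurableSet_closedBall.compl).2
      (.of_forall fun y hy => mul_nonneg (hpos y hy) (hv0 y))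
  have hint := integrableOn_exteriorPoissonKernel_mul hs hv
    (by simpa using hfar 0 (2 * r) (by positivity)) hx
  rw [← ENNReal.ofReal_le_ofReal_iff (integral_nonneg_of_ae hnonneg),
    ofReal_integral_eq_lintegral_ofReal hint hnonneg]
  refine (ofReal_le_poissonExtension hs hv hv0 hfar hsecond hsub hx).trans_eq ?_
  rw [poissonExtension, if_pos hx]
  exact setLIntegral_congr_fun measurableSet_closedBall.compl
    fun y hy => (ENNReal.ofReal_mul (hpos y hy)).symm

end

section

variable {n : ℕ} {s : ℝ} {u : Pt n → ℝ}

lemma C11loc.mono {D D' : Set (Pt n)} (hu : C11loc n u D') (hD : IsOpen D) (hsub : D ⊆ D') :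
    C11loc n u D := by
  intro x hx
  obtain ⟨ε, hε, -, hdiff, K, hK⟩ := hu x (hsub hx)
  obtain ⟨δ, hδ, hball⟩ := Metric.isOpen_iff.1 (hD.inter isOpen_ball) x ⟨hx, mem_ball_self hε⟩
  have hball' : ball x δ ⊆ ball x ε := hball.trans inter_subset_right
  have heq {y : Pt n} (hy : y ∈ ball x δ) :
      fderivWithin ℝ u (ball x δ) y = fderivWithin ℝ u (ball x ε) y := by
    rw [fderivWithin_of_isOpen isOpen_ball hy, fderivWithin_of_isOpen isOpen_ball (hball' hy)]
  refine ⟨δ, hδ, hball.trans inter_subset_left, hdiff.mono hball', K, fun y hy z hz => ?_⟩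
  simpa only [heq hy, heq hz] using hK (hball' hy) (hball' hz)

lemma C11loc.continuous (hu : C11loc n u univ) : Continuous u := by
  refine continuous_iff_continuousAt.2 fun x => ?_
  obtain ⟨ε, hε, -, hdiff, -⟩ := hu x (mem_univ x)
  exact (hdiff.differentiableAt (ball_mem_nhds x hε)).continuousAt

lemma setIntegral_sub_div_dist_rpow {δ : ℝ} (hδ : 0 < δ) (x : Pt n) :
    ∫ y in {y | δ ≤ dist x y}, (u x - u y) / dist x y ^ (n + 2 * s) =
      ∫ h in (ball 0 δ)ᶜ, (u x - u (x + h)) * shiftedRieszKernel s 0 h := by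
  have hpre : (x + ·) ⁻¹' {y | δ ≤ dist x y} = (ball 0 δ)ᶜ := by
    ext h
    simp
  rw [← (measurePreserving_add_left volume x).setIntegral_preimage_emb
    (measurableEmbedding_addLeft x), hpre]
  refine setIntegral_congr_fun measurableSet_ball.compl fun h hh => ?_
  have hh0 : h ≠ 0 := by
    rintro rfl
    simp [hδ] at hh
  simp [shiftedRieszKernel_zero s hh0, div_eq_mul_inv]

lemma HasFracLap.tendsto_setIntegral {Cns L : ℝ} {x : Pt n} (hCns : Cns ≠ 0)
    (h : HasFracLap n s Cns u x L) :
    Tendsto (fun δ => ∫ h in (ball 0 δ)ᶜ, (u x - u (x + h)) * shiftedRieszKernel s 0 h)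
      (nhdsWithin 0 (Ioi 0)) (nhds (Cns⁻¹ * L)) := by
  refine (h.const_mul Cns⁻¹).congr' ?_
  filter_upwards [self_mem_nhdsWithin] with δ hδ
  rw [inv_mul_cancel_left₀ hCns, setIntegral_sub_div_dist_rpow hδ]

lemma MemL2s.integrableOn_comp_add_mul (hu : MemL2s n s u) (hs : 0 ≤ s) (hum : Measurable u)
    (x : Pt n) {δ : ℝ} (hδ : 0 < δ) :
    IntegrableOn (fun h => u (x + h) * shiftedRieszKernel s 0 h) (ball 0 δ)ᶜ :=
  integrableOn_comp_add_mul_shiftedRieszKernel_zero hs hδ hum (by simpa using hu.2) x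

lemma C11loc.exists_sub_add_sub_le {D : Set (Pt n)} (hu : C11loc n u D) {x : Pt n} (hx : x ∈ D) :
    ∃ ε > 0, ∃ K ≥ 0, ∀ h, ‖h‖ < ε →
      u x - u (x + h) + (u x - u (x - h)) ≤ 2 * (K * ‖h‖ ^ 2) := by
  obtain ⟨ε, hε, -, hdiff, K, hK⟩ := hu x hx
  exact ⟨ε, hε, K, K.2, fun h hh => mul_assoc (2 : ℝ) K (‖h‖ ^ 2) ▸
    sub_add_sub_le_of_lipschitzOnWith_fderivWithin hdiff hK hh⟩

end

end

theorem comparison_with_poisson_integral_general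
    (n : ℕ) (hn : 0 < n) (s : ℝ) (hs : s ∈ Set.Ioo (0 : ℝ) 1) (Cns : ℝ) (hCns : 0 < Cns)
    (v : Pt n → ℝ) (hvL : MemL2s n s v) (hv : Continuous v) (hvC : C11loc n v {x | 0 < v x})
    (hvnn : ∀ x : Pt n, 0 ≤ v x)
    (hsub : ∀ x : Pt n, 0 < v x → ∃ L : ℝ, HasFracLap n s Cns v x L ∧ L ≤ 0)
    (r : ℝ) (x : Pt n) (hx : ‖x‖ < r) :
    v x ≤ ∫ y in {y : Pt n | r < ‖y‖},
      Bns n s * ((r ^ 2 - ‖x‖ ^ 2) / (‖y‖ ^ 2 - r ^ 2)) ^ s / ‖x - y‖ ^ n * v y := by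
  have : Nonempty (Fin n) := ⟨⟨0, hn⟩⟩
  have hsuper : ∀ z, 0 < v z → ∃ L ≤ 0, Tendsto
      (fun δ => ∫ h in (ball 0 δ)ᶜ, (v z - v (z + h)) * shiftedRieszKernel s 0 h)
      (nhdsWithin 0 (Ioi 0)) (nhds L) := by
    intro z hz
    obtain ⟨L, hL, hL0⟩ := hsub z hz
    exact ⟨Cns⁻¹ * L, mul_nonpos_of_nonneg_of_nonpos (by positivity) hL0,
      hL.tendsto_setIntegral hCns.ne'⟩
  have hcompl : {y : Pt n | r < ‖y‖} = (closedBall 0 r)ᶜ := by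
    ext y
    simp
  simpa only [hcompl, exteriorPoissonKernel, finrank_euclideanSpace_fin] using
    le_setIntegral_exteriorPoissonKernel_mul hs hv hvnn
      (fun z _ => hvL.integrableOn_comp_add_mul hs.1.le hv.measurable z)
      (fun z hz => hvC.exists_sub_add_sub_le hz) hsuper hx

/-- Comparison with the Poisson integral for bounded nonnegative functions that are
`s`-subharmonic where positive. -/
theorem comparison_with_poisson_integral
    (n : ℕ) (hn : 0 < n) (s : ℝ) (hs : s ∈ Set.Ioo (0 : ℝ) 1) (Cns : ℝ) (hCns : 0 < Cns)
    (v : Pt n → ℝ) (hvL : MemL2s n s v) (hvC : C11loc n v Set.univ)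
    (hvbdd : ∃ M : ℝ, ∀ x : Pt n, |v x| ≤ M)
    (hvnn : ∀ x : Pt n, 0 ≤ v x)
    (hsub : ∀ x : Pt n, 0 < v x → ∃ L : ℝ, HasFracLap n s Cns v x L ∧ L ≤ 0) :
    ∀ r : ℝ, 0 < r → ∀ x : Pt n, ‖x‖ < r →
      v x ≤ ∫ y in {y : Pt n | r < ‖y‖},
        Bns n s * ((r ^ 2 - ‖x‖ ^ 2) / (‖y‖ ^ 2 - r ^ 2)) ^ s / ‖x - y‖ ^ (n : ℕ) * v y :=
  fun r _ x hx => comparison_with_poisson_integral_general n hn s hs Cns hCns v hvL hvC.continuous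
    (hvC.mono (isOpen_lt continuous_const hvC.continuous) (subset_univ _)) hvnn hsub r x hx
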